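/- Let H be a graph and 𝔠 a partition of E(H) into matchings such that the union of any two matchings in 𝔠 is a connected edge set. Then for every transversal T of 𝔠 there exists a family of connected, pairwise disjoint, pairwise incident edge sets of H traversed by T. -/

import Mathlib

/-- A multigraph (possibly with parallel edges, but loopless): each edge `e` has a
pair of distinct endpoints `ends e`. -/
structure Multigraph (V E : Type*) where
  ends : E → Sym2 V
  not_isDiag : ∀ e, ¬ (ends e).IsDiag

namespace Multigraph

variable {V E : Type*} (G : Multigraph V E)

/-- A matching: a set of pairwise non-incident edges. -/
def Matching (M : Set E) : Prop :=
  ∀ e ∈ M, ∀ f ∈ M, e ≠ f → ¬ ∃ v : V, v ∈ G.ends e ∧ v ∈ G.ends f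

/-- An edge set `F` is connected if it is nonempty and any two of its edges are
linked by a chain of edges of `F`, consecutive ones sharing an endpoint. -/
def EdgesConnected (F : Set E) : Prop :=
  F.Nonempty ∧ ∀ e ∈ F, ∀ f ∈ F,
    Relation.ReflTransGen
      (fun a b => a ∈ F ∧ b ∈ F ∧ ∃ v : V, v ∈ G.ends a ∧ v ∈ G.ends b) e f

/-- Two edge sets are incident if some edge of one shares an endpoint with some
edge of the other. -/
def EdgesIncident (F F' : Set E) : Prop :=
  ∃ e ∈ F, ∃ f ∈ F', ∃ v : V, v ∈ G.ends e ∧ v ∈ G.ends f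

end Multigraph

/-- `𝔠` is a partition of a set into nonempty, pairwise disjoint classes covering
everything. -/
def IsEdgePartition {E : Type*} (𝔠 : Set (Set E)) : Prop :=
  (∀ M ∈ 𝔠, M.Nonempty) ∧ (⋃₀ 𝔠 = Set.univ) ∧
  (∀ M ∈ 𝔠, ∀ N ∈ 𝔠, M ≠ N → Disjoint M N)

/-- The family `𝔎` of pairwise disjoint sets is traversed by `T`. -/
def TraversedBy {α : Type*} (𝔎 : Set (Set α)) (T : Set α) : Prop :=
  (∀ A ∈ 𝔎, ∃! e, e ∈ T ∧ e ∈ A) ∧ ∀ e ∈ T, ∃ A ∈ 𝔎, e ∈ A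

/-!
Regard the partition as a colouring of the line graph of `G` in which any two colour classes induce
a connected subgraph; what is sought is a complete minor of the line graph rooted at the
transversal.

If some vertex is incident with edges of all colours, these edges form a clique of the line graph.
Either Menger's theorem links the transversal to this clique, or a separation of smaller order cuts
it off, which then meets all colour classes but one. Contracting the side of the clique to a single
vertex preserves the hypotheses, and induction applies. Otherwise either some colour class is a
single edge, and then any two edges of `G` meet, or counting endpoints shows that `G` is a complete
graph with as many vertices as there are colours. In a complete graph, Hall's theorem assigns the
edges of the transversal to the vertices, and the other edges are distributed among their endpoints.
-/

/-! ### Connected sets, minors and separations -/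

section Connectivity

variable {α β γ K : Type*} {L : SimpleGraph α} {H : SimpleGraph β} {J : SimpleGraph γ}

theorem subset_of_connected_induce {S U : Set α} (hS : (L.induce S).Connected)
    (hne : (S ∩ U).Nonempty) (hU : ∀ a ∈ S ∩ U, ∀ b ∈ S, L.Adj a b → b ∈ U) : S ⊆ U := by
  intro b hb
  by_contra hbU
  obtain ⟨a, haS, haU⟩ := hne
  obtain ⟨walk⟩ := hS.preconnected ⟨a, haS⟩ ⟨b, hb⟩
  obtain ⟨d, -, hfst, hsnd⟩ := walk.exists_boundary_dart (Subtype.val ⁻¹' U) haU hbU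
  exact hsnd (hU d.fst ⟨d.fst.2, hfst⟩ d.snd d.snd.2 d.adj)

theorem connected_induce_of_forall_subset {S : Set α} (hne : S.Nonempty)
    (hS : ∀ U : Set α, (S ∩ U).Nonempty →
      (∀ a ∈ S ∩ U, ∀ b ∈ S, L.Adj a b → b ∈ U) → S ⊆ U) : (L.induce S).Connected := by
  have := hne.to_subtype
  refine ⟨fun a b => ?_⟩
  have hsub := hS {x | ∃ hx : x ∈ S, (L.induce S).Reachable a ⟨x, hx⟩} ⟨a, a.2, a.2, .rfl⟩
    fun x hx y hy hxy => ⟨hy, hx.2.2.trans (SimpleGraph.Adj.reachable (by exact hxy))⟩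
  exact (hsub b.2).2

theorem connected_induce_singleton (L : SimpleGraph α) (a : α) : (L.induce {a}).Connected :=
  connected_induce_of_forall_subset ⟨a, rfl⟩ fun U ⟨b, hb, hbU⟩ _ => by
    obtain rfl : b = a := hb
    exact Set.singleton_subset_iff.2 hbU

theorem connected_induce_of_forall_adj {S : Set α} {a : α} (ha : a ∈ S)
    (hS : ∀ b ∈ S, b ≠ a → L.Adj b a) : (L.induce S).Connected := by
  refine connected_induce_of_forall_subset ⟨a, ha⟩ fun U ⟨b, hb⟩ hU => ?_
  have haU : a ∈ U := by
    by_cases hba : b = a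
    · exact hba ▸ hb.2
    · exact hU b hb a ha (hS b hb.1 hba)
  intro d hd
  by_cases hda : d = a
  · exact hda ▸ haU
  · exact hU a ⟨ha, haU⟩ d hd (hS d hd hda).symm

/-- A model of `H` as a minor of `L`: pairwise disjoint connected branch sets `D p`, one for each
vertex `p` of `H`, with an edge of `L` between the branch sets of any two adjacent vertices. -/
structure MinorModel (H : SimpleGraph β) (L : SimpleGraph α) (D : β → Set α) : Prop where
  connected : ∀ p, (L.induce (D p)).Connected
  disjoint : Pairwise fun p q => Disjoint (D p) (D q)
  exists_adj : ∀ ⦃p q⦄, H.Adj p q → ∃ a ∈ D p, ∃ b ∈ D q, L.Adj a b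

theorem MinorModel.connected_biUnion {D : β → Set α} (hD : MinorModel H L D) {S : Set β}
    (hS : (H.induce S).Connected) : (L.induce (⋃ p ∈ S, D p)).Connected := by
  have bag_subset {U : Set α} (hU : ∀ a ∈ (⋃ p ∈ S, D p) ∩ U, ∀ b ∈ ⋃ p ∈ S, D p, L.Adj a b → b ∈ U)
      {p : β} (hp : p ∈ S) (hne : (D p ∩ U).Nonempty) : D p ⊆ U :=
    subset_of_connected_induce (hD.connected p) hne fun a ha b hb =>
      hU a ⟨Set.mem_biUnion hp ha.1, ha.2⟩ b (Set.mem_biUnion hp hb)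
  obtain ⟨⟨p₀, hp₀⟩⟩ := hS.nonempty
  obtain ⟨⟨a₀, ha₀⟩⟩ := (hD.connected p₀).nonempty
  refine connected_induce_of_forall_subset ⟨a₀, Set.mem_biUnion hp₀ ha₀⟩ fun U hne hU => ?_
  obtain ⟨a, ha, haU⟩ := hne
  obtain ⟨p, hp, hap⟩ := Set.mem_iUnion₂.1 ha
  refine Set.iUnion₂_subset fun q hq => subset_of_connected_induce (U := {r | D r ⊆ U}) hS
    ⟨p, hp, bag_subset hU hp ⟨a, hap, haU⟩⟩ (fun r hr s hs hrs => ?_) hq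
  obtain ⟨b, hb, d, hd, hbd⟩ := hD.exists_adj hrs
  exact bag_subset hU hs ⟨d, hd, hU b ⟨Set.mem_biUnion hr.1 hb, hr.2 hb⟩ d
    (Set.mem_biUnion hs hd) hbd⟩

theorem MinorModel.comp {D : β → Set α} {F : γ → Set β} (hD : MinorModel H L D)
    (hF : MinorModel J H F) : MinorModel J L fun i => ⋃ p ∈ F i, D p where
  connected i := hD.connected_biUnion (hF.connected i)
  disjoint i j hij := by
    simp only [Set.disjoint_iUnion_left, Set.disjoint_iUnion_right]
    exact fun p hp q hq => hD.disjoint fun hqp =>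
      Set.disjoint_left.1 (hF.disjoint hij) hq (hqp ▸ hp)
  exists_adj i j hij := by
    obtain ⟨p, hp, q, hq, hpq⟩ := hF.exists_adj hij
    obtain ⟨a, ha, b, hb, hab⟩ := hD.exists_adj hpq
    exact ⟨a, Set.mem_biUnion hp ha, b, Set.mem_biUnion hq hb, hab⟩

/-- `L` has a complete minor whose branch sets are rooted at the vertices `t i`. -/
def RootedCompleteMinor (L : SimpleGraph α) (t : K → α) : Prop :=
  ∃ F : K → Set α, MinorModel ⊤ L F ∧ ∀ i, t i ∈ F i

theorem RootedCompleteMinor.of_minorModel {D : β → Set α} (hD : MinorModel H L D) {s : K → β}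
    {t : K → α} (hst : ∀ i, t i ∈ D (s i)) :
    RootedCompleteMinor H s → RootedCompleteMinor L t
  | ⟨_, hF, hs⟩ => ⟨_, hD.comp hF, fun i => Set.mem_biUnion (hs i) (hst i)⟩

theorem RootedCompleteMinor.comp {ι : Type*} {t : K → α} {f : ι → K} (hf : Function.Injective f) :
    RootedCompleteMinor L t → RootedCompleteMinor L (t ∘ f)
  | ⟨F, hF, ht⟩ => ⟨F ∘ f,
      ⟨fun i => hF.connected (f i), fun _ _ hij => hF.disjoint (hf.ne hij),
        fun _ _ hij => hF.exists_adj (hf.ne hij)⟩,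
      fun i => ht (f i)⟩

theorem rootedCompleteMinor_of_forall_adj {t : K → α}
    (ht : ∀ i j, i ≠ j → L.Adj (t i) (t j)) : RootedCompleteMinor L t :=
  ⟨fun i => {t i},
    ⟨fun i => connected_induce_singleton L (t i),
      fun i j hij => Set.disjoint_singleton.2 (ht i j hij).ne,
      fun i j hij => ⟨t i, rfl, t j, rfl, ht i j hij⟩⟩,
    fun _ => rfl⟩

/-- A separation of `L`: two sets covering all vertices such that no edge of `L` leads from
`P \ Q` to `Q \ P`. Its order is the cardinality of `P ∩ Q`. -/
structure IsSeparation (L : SimpleGraph α) (P Q : Set α) : Prop where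
  mem_or_mem : ∀ a, a ∈ P ∨ a ∈ Q
  not_adj : ∀ ⦃a b⦄, a ∉ Q → b ∉ P → ¬ L.Adj a b

theorem IsSeparation.symm {P Q : Set α} (h : IsSeparation L P Q) : IsSeparation L Q P :=
  ⟨fun a => (h.mem_or_mem a).symm, fun _ _ ha hb hab => h.not_adj hb ha hab.symm⟩

/-- Every separation of `L` with `A` on the first and `B` on the second side has order at least
`k`. -/
def SeparationOrderGE (L : SimpleGraph α) (A B : Set α) (k : ℕ) : Prop :=
  ∀ P Q, IsSeparation L P Q → A ⊆ P → B ⊆ Q → k ≤ (P ∩ Q).ncard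

theorem SeparationOrderGE.symm {A B : Set α} {k : ℕ} (h : SeparationOrderGE L A B k) :
    SeparationOrderGE L B A k :=
  fun P Q hPQ hB hA => Set.inter_comm P Q ▸ h Q P hPQ.symm hA hB

theorem IsSeparation.refine {P Q P' Q' : Set α} (h : IsSeparation L P Q)
    (h' : IsSeparation (L.induce Q).spanningCoe P' Q') :
    IsSeparation L (P ∪ P') (Q ∩ Q') where
  mem_or_mem a := by
    rcases h.mem_or_mem a, h'.mem_or_mem a with ⟨h₁ | h₁, h₂ | h₂⟩ <;> grind
  not_adj a b ha hb hab := by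
    have hbP : b ∉ P := fun h => hb (.inl h)
    have hbQ : b ∈ Q := (h.mem_or_mem b).resolve_left hbP
    by_cases haQ : a ∈ Q
    · exact h'.not_adj (fun haQ' => ha ⟨haQ, haQ'⟩) (fun hbP' => hb (.inr hbP'))
        (by simpa using ⟨hab, haQ, hbQ⟩)
    · exact h.not_adj haQ hbP hab

theorem SeparationOrderGE.induce_right [Finite α] {A B P Q : Set α} {k : ℕ}
    (h : SeparationOrderGE L A B k) (hPQ : IsSeparation L P Q) (hA : A ⊆ P) (hB : B ⊆ Q) :
    SeparationOrderGE (L.induce Q).spanningCoe (P ∩ Q) B k := by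
  intro P' Q' hsep hP' hB'
  calc k ≤ ((P ∪ P') ∩ (Q ∩ Q')).ncard :=
        h _ _ (hPQ.refine hsep) (hA.trans Set.subset_union_left) (Set.subset_inter hB hB')
    _ ≤ (P' ∩ Q').ncard := Set.ncard_le_ncard fun a ha =>
        ⟨ha.1.elim (fun haP => hP' ⟨haP, ha.2.1⟩) id, ha.2.2⟩

/-- `A` is linked into `B`: there are pairwise disjoint connected sets, one for each `a ∈ A`,
that contain `a` and meet `B`. The values of `F` off `A` carry no information. -/
def LinkedInto (L : SimpleGraph α) (A B : Set α) : Prop :=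
  ∃ F : α → Set α, (∀ a ∈ A, a ∈ F a ∧ (L.induce (F a)).Connected ∧ (B ∩ F a).Nonempty) ∧
    A.PairwiseDisjoint F

theorem LinkedInto.of_subset (L : SimpleGraph α) {A B : Set α} (h : A ⊆ B) : LinkedInto L A B :=
  ⟨fun a => {a}, fun a ha => ⟨rfl, connected_induce_singleton L a, a, h ha, rfl⟩,
    fun _ _ _ _ hab => Set.disjoint_singleton.2 hab⟩

theorem connected_induce_mono {L' : SimpleGraph α} {S : Set α} (hL : L ≤ L')
    (hS : (L.induce S).Connected) : (L'.induce S).Connected :=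
  hS.mono fun _ _ h => hL h

theorem LinkedInto.mono {L' : SimpleGraph α} {A B : Set α} (hL : L ≤ L') :
    LinkedInto L A B → LinkedInto L' A B
  | ⟨F, hF, hdisj⟩ => ⟨F, fun a ha => ⟨(hF a ha).1, connected_induce_mono hL (hF a ha).2.1,
      (hF a ha).2.2⟩, hdisj⟩

theorem subset_of_connected_spanningCoe {U S : Set α} {a : α} (haU : a ∈ U) (haS : a ∈ S)
    (hS : ((L.induce U).spanningCoe.induce S).Connected) : S ⊆ U :=
  subset_of_connected_induce hS ⟨a, haS, haU⟩ fun x _ y _ hxy => by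
    obtain ⟨-, -, hy⟩ : L.Adj x y ∧ x ∈ U ∧ y ∈ U := by simpa using hxy
    exact hy

theorem exists_bijOn_of_pairwiseDisjoint [Finite α] {A X : Set α} {F : α → Set α}
    (hF : A.PairwiseDisjoint F) (hX : ∀ a ∈ A, (X ∩ F a).Nonempty) (hcard : X.ncard ≤ A.ncard) :
    ∃ f : α → α, Set.BijOn f A X ∧ ∀ a ∈ A, f a ∈ F a ∧ ∀ x ∈ X, x ∈ F a → x = f a := by
  choose! f hfX hfF using hX
  have inj : Set.InjOn f A := fun a ha b hb hab =>
    hF.elim_set ha hb (f a) (hfF a ha) (hab ▸ hfF b hb)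
  have surj : f '' A = X := Set.eq_of_subset_of_ncard_le (Set.image_subset_iff.2 hfX)
    (by rwa [inj.ncard_image])
  refine ⟨f, ⟨hfX, inj, surj.ge⟩, fun a ha => ⟨hfF a ha, fun x hx hxa => ?_⟩⟩
  obtain ⟨b, hb, rfl⟩ := surj.ge hx
  rw [hF.elim_set ha hb _ hxa (hfF b hb)]

theorem SeparationOrderGE.subset_of_bot [Finite α] {A B : Set α}
    (h : SeparationOrderGE (⊥ : SimpleGraph α) A B A.ncard) : A ⊆ B := by
  have hsep : IsSeparation (⊥ : SimpleGraph α) A (B ∪ Aᶜ) :=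
    ⟨fun a => (Classical.em (a ∈ A)).imp id .inr, fun _ _ _ _ => id⟩
  have hinter : A ∩ (B ∪ Aᶜ) = A := Set.eq_of_subset_of_ncard_le Set.inter_subset_left
    (h _ _ hsep subset_rfl Set.subset_union_left)
  exact fun a ha => (hinter.ge ha).2.resolve_right fun hna => hna ha

theorem IsSeparation.of_deleteEdge {P Q : Set α} {x y : α} (hx : x ∉ Q)
    (h : IsSeparation (L.deleteEdges {s(x, y)}) P Q) : IsSeparation L P (insert x Q) where
  mem_or_mem a := (h.mem_or_mem a).imp_right (Set.mem_insert_of_mem x)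
  not_adj a b ha hb hab := by
    have hbQ : b ∈ Q := (h.mem_or_mem b).resolve_left hb
    simp only [Set.mem_insert_iff, not_or] at ha
    refine h.not_adj ha.2 hb ⟨hab, fun he => ?_⟩
    obtain ⟨rfl, rfl⟩ | ⟨rfl, rfl⟩ : a = x ∧ b = y ∨ a = y ∧ b = x := by simpa using he.1
    · exact ha.1 rfl
    · exact hx hbQ

-- The end `f a` of each piece of the first linkage is joined to the start `σ (f a)` of a piece of
-- the second.
theorem exists_linkage_of_join {A B X Y : Set α} {F F' : α → Set α} {f σ : α → α}
    (hFA : A.PairwiseDisjoint F) (hFY : Y.PairwiseDisjoint F')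
    (hF : ∀ a ∈ A, a ∈ F a ∧ (L.induce (F a)).Connected ∧ f a ∈ F a)
    (hF' : ∀ s ∈ Y, s ∈ F' s ∧ (L.induce (F' s)).Connected ∧ (B ∩ F' s).Nonempty)
    (hf : Set.BijOn f A X) (hσ : Set.MapsTo σ X Y) (hσX : Set.InjOn σ X)
    (hjoin : ∀ s ∈ X, σ s = s ∨ L.Adj s (σ s))
    (hmeet : ∀ a ∈ A, ∀ s ∈ Y, ∀ z ∈ F a, z ∈ F' s → s = σ (f a)) : LinkedInto L A B := by
  have hY {a : α} (ha : a ∈ A) : σ (f a) ∈ Y := hσ (hf.mapsTo ha)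
  have inj : Set.InjOn (fun a => σ (f a)) A := hσX.comp hf.injOn hf.mapsTo
  refine ⟨fun a => F a ∪ F' (σ (f a)), fun a ha => ⟨.inl (hF a ha).1, ?_, ?_⟩,
    fun a ha b hb hab => ?_⟩
  · obtain ⟨-, conn, hfa⟩ := hF a ha
    obtain ⟨hσa, conn', -⟩ := hF' _ (hY ha)
    rcases hjoin _ (hf.mapsTo ha) with heq | hadj
    · exact SimpleGraph.induce_union_connected conn.preconnected conn'.preconnected
        ⟨f a, hfa, by rwa [heq] at hσa ⊢⟩
    · exact SimpleGraph.connected_induce_union conn.preconnected conn'.preconnected hfa hσa hadj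
  · exact (hF' _ (hY ha)).2.2.mono (Set.inter_subset_inter_right _ Set.subset_union_right)
  · have hne : σ (f a) ≠ σ (f b) := fun h => hab (inj ha hb h)
    refine Set.disjoint_left.2 ?_
    rintro z (hza | hza) (hzb | hzb)
    · exact hab (hFA.elim_set ha hb z hza hzb)
    · exact hne (hmeet a ha _ (hY hb) z hza hzb).symm
    · exact hne (hmeet b hb _ (hY ha) z hzb hza)
    · exact hne (hFY.elim_set (hY ha) (hY hb) z hza hzb)

theorem LinkedInto.exists_linkage_subset {A B U : Set α} (hA : A ⊆ U)
    (h : LinkedInto (L.induce U).spanningCoe A B) :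
    ∃ F : α → Set α, (∀ a ∈ A, a ∈ F a ∧ (L.induce (F a)).Connected ∧ (B ∩ F a).Nonempty) ∧
      A.PairwiseDisjoint F ∧ ∀ a ∈ A, F a ⊆ U :=
  let ⟨F, hF, hdisj⟩ := h
  ⟨F, fun a ha => ⟨(hF a ha).1, connected_induce_mono (L.spanningCoe_induce_le U) (hF a ha).2.1,
    (hF a ha).2.2⟩, hdisj,
    fun a ha => subset_of_connected_spanningCoe (hA ha) (hF a ha).1 (hF a ha).2.1⟩

theorem LinkedInto.of_sides [Finite α] {A B P Q : Set α} {x y : α} (hxy : L.Adj x y)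
    (hx : x ∈ P \ Q) (hy : y ∈ Q \ P) (hA : A ⊆ P) (hcard : A.ncard = (P ∩ Q).ncard + 1)
    (hP : LinkedInto (L.induce P).spanningCoe A (insert x (P ∩ Q)))
    (hQ : LinkedInto (L.induce Q).spanningCoe (insert y (P ∩ Q)) B) :
    LinkedInto L A B := by
  classical
  obtain ⟨F, hF, hdisj, hsub⟩ := hP.exists_linkage_subset hA
  obtain ⟨F', hF', hdisj', hsub'⟩ :=
    hQ.exists_linkage_subset (Set.insert_subset hy.1 Set.inter_subset_right)
  have hxmem : x ∉ P ∩ Q := fun h => hx.2 h.2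
  obtain ⟨f, hf, hfF⟩ := exists_bijOn_of_pairwiseDisjoint hdisj (fun a ha => (hF a ha).2.2)
    (by rw [Set.ncard_insert_of_notMem hxmem, hcard])
  set σ : α → α := Function.update id x y
  have hσx : σ x = y := Function.update_self x y id
  have hσ {s : α} (hs : s ∈ P ∩ Q) : σ s = s :=
    Function.update_of_ne (fun hsx : s = x => hxmem (hsx ▸ hs)) y id
  have hyσ {s : α} (hs : s ∈ P ∩ Q) : y ≠ σ s := fun h => hy.2 (h ▸ (hσ hs).symm ▸ hs.1)
  refine exists_linkage_of_join (σ := σ) hdisj hdisj'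
    (fun a ha => ⟨(hF a ha).1, (hF a ha).2.1, (hfF a ha).1⟩) hF' hf ?_ ?_ ?_ ?_
  · rintro s (rfl | hs)
    · exact .inl hσx
    · exact .inr ((hσ hs).symm ▸ hs)
  · rintro s (rfl | hs) r (rfl | hr) hsr
    · rfl
    · exact (hyσ hr (hσx.symm.trans hsr)).elim
    · exact (hyσ hs (hσx.symm.trans hsr.symm)).elim
    · rwa [hσ hs, hσ hr] at hsr
  · rintro s (rfl | hs)
    · exact .inr (hσx.symm ▸ hxy)
    · exact .inl (hσ hs)
  · intro a ha s hs z hza hzs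
    have hz : z ∈ P ∩ Q := ⟨hsub a ha hza, hsub' s hs hzs⟩
    have hzf : z = f a := (hfF a ha).2 z (.inr hz) hza
    have hsz : s = z := hdisj'.elim_set hs (.inr hz) z hzs (hF' z (.inr hz)).1
    exact hsz.trans (hzf ▸ (hσ hz).symm)

theorem spanningCoe_induce_lt {U : Set α} {x y : α} (hxy : L.Adj x y) (hU : x ∉ U ∨ y ∉ U) :
    (L.induce U).spanningCoe < L := by
  refine lt_of_le_of_ne (L.spanningCoe_induce_le U) fun h => ?_
  have hadj : L.Adj x y ∧ x ∈ U ∧ y ∈ U := by simpa using h.ge hxy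
  exact hU.elim (· hadj.2.1) (· hadj.2.2)

theorem SeparationOrderGE.exists_tight_separation [Finite α] {A B : Set α} {k : ℕ} {e : Sym2 α}
    (h : SeparationOrderGE L A B k) (hdel : ¬ SeparationOrderGE (L.deleteEdges {e}) A B k) :
    ∃ P Q x y, L.Adj x y ∧ x ∈ P \ Q ∧ y ∈ Q \ P ∧ A ⊆ P ∧ B ⊆ Q ∧
      IsSeparation L P (insert x Q) ∧ IsSeparation L (insert y P) Q ∧ k = (P ∩ Q).ncard + 1 := by
  simp only [SeparationOrderGE, not_forall, not_le] at hdel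
  obtain ⟨P, Q, hsep, hA, hB, horder⟩ := hdel
  obtain ⟨x, y, hxQ, hyP, hxy, rfl⟩ : ∃ x y, x ∉ Q ∧ y ∉ P ∧ L.Adj x y ∧ s(x, y) = e := by
    by_contra! hno
    refine (h P Q ⟨hsep.mem_or_mem, fun x y hx hy hxy => ?_⟩ hA hB).not_gt horder
    exact hsep.not_adj hx hy ⟨hxy, fun hmem => hno x y hx hy hxy hmem.1⟩
  have hsepP : IsSeparation L P (insert x Q) := hsep.of_deleteEdge hxQ
  refine ⟨P, Q, x, y, hxy, ⟨(hsep.mem_or_mem x).resolve_right hxQ, hxQ⟩,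
    ⟨(hsep.mem_or_mem y).resolve_left hyP, hyP⟩, hA, hB, hsepP,
    (IsSeparation.of_deleteEdge (y := x) hyP (Sym2.eq_swap ▸ hsep.symm)).symm, ?_⟩
  have hle : k ≤ (insert x (P ∩ Q)).ncard :=
    (h _ _ hsepP hA (hB.trans (Set.subset_insert x Q))).trans <|
      Set.ncard_le_ncard fun _ hz => hz.2.imp id fun hzQ => ⟨hz.1, hzQ⟩
  rw [Set.ncard_insert_of_notMem fun hmem => hxQ hmem.2] at hle
  omega

/-- Menger's theorem. -/
theorem SeparationOrderGE.linkedInto [Finite α] {A B : Set α}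
    (h : SeparationOrderGE L A B A.ncard) : LinkedInto L A B := by
  induction L using WellFoundedLT.induction generalizing A B with
  | ind L ih =>
  by_cases hbot : L = ⊥
  · subst hbot
    exact LinkedInto.of_subset _ h.subset_of_bot
  obtain ⟨x', y', hxy'⟩ := SimpleGraph.ne_bot_iff_exists_adj.1 hbot
  have hlt : L.deleteEdges {s(x', y')} < L :=
    lt_of_le_of_ne (L.deleteEdges_le _) fun h => by simpa using h.ge hxy'
  by_cases hdel : SeparationOrderGE (L.deleteEdges {s(x', y')}) A B A.ncard
  · exact (ih _ hlt hdel).mono hlt.le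
  obtain ⟨P, Q, x, y, hxy, hx, hy, hA, hB, hsepP, hsepQ, hcard⟩ := h.exists_tight_separation hdel
  have hinterP : insert x Q ∩ P = insert x (P ∩ Q) := by
    rw [Set.insert_inter_of_mem hx.1, Set.inter_comm]
  have hinterQ : insert y P ∩ Q = insert y (P ∩ Q) := Set.insert_inter_of_mem hy.1
  have linkP := ih _ (spanningCoe_induce_lt hxy (.inr hy.2))
    (h.symm.induce_right hsepP.symm (hB.trans (Set.subset_insert x Q)) hA).symm
  have linkQ := ih _ (spanningCoe_induce_lt hxy (.inl hx.2)) (A := insert y P ∩ Q) (B := B) <| by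
    rw [hinterQ, Set.ncard_insert_of_notMem fun h => hy.2 h.1, ← hcard, ← hinterQ]
    exact h.induce_right hsepQ (hA.trans (Set.subset_insert y P)) hB
  exact LinkedInto.of_sides hxy hx hy hA hcard (hinterP ▸ linkP) (hinterQ ▸ linkQ)

theorem LinkedInto.rootedCompleteMinor {B : Set α} {t : K → α} (ht : Function.Injective t)
    (hB : L.IsClique B) (h : LinkedInto L (Set.range t) B) : RootedCompleteMinor L t := by
  obtain ⟨F, hF, hdisj⟩ := h
  have disj {i j : K} (hij : i ≠ j) : Disjoint (F (t i)) (F (t j)) :=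
    hdisj ⟨i, rfl⟩ ⟨j, rfl⟩ (ht.ne hij)
  refine ⟨fun i => F (t i), ⟨fun i => (hF _ ⟨i, rfl⟩).2.1, fun i j => disj, fun i j hij => ?_⟩,
    fun i => (hF _ ⟨i, rfl⟩).1⟩
  obtain ⟨a, haB, ha⟩ := (hF _ ⟨i, rfl⟩).2.2
  obtain ⟨b, hbB, hb⟩ := (hF _ ⟨j, rfl⟩).2.2
  exact ⟨a, ha, b, hb, hB haB hbB ((disj hij).ne_of_mem ha hb)⟩

end Connectivity

section Kempe

variable {α K : Type*} {L : SimpleGraph α} {c : α → K} {t : K → α} {P Q B : Set α}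

/-- A Kempe colouring: a proper vertex colouring in which any two colour classes together induce a
connected subgraph. -/
structure IsKempeColoring (L : SimpleGraph α) (c : α → K) : Prop where
  ne_of_adj : ∀ ⦃a b⦄, L.Adj a b → c a ≠ c b
  connected : ∀ ⦃i j⦄, i ≠ j → (L.induce {a | c a = i ∨ c a = j}).Connected

theorem IsKempeColoring.injOn_of_isClique (hc : IsKempeColoring L c) (hB : L.IsClique B) :
    Set.InjOn c B := fun a ha b hb hab => by
  by_contra hne
  exact hc.ne_of_adj (hB ha hb hne) hab

theorem IsKempeColoring.exists_adj (hc : IsKempeColoring L c) {i : K} (hi : ∃ b, c b = i) {a : α}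
    (ha : c a ≠ i) : ∃ b, c b = i ∧ L.Adj a b := by
  by_contra! hnadj
  obtain ⟨b, hb⟩ := hi
  have hsub := subset_of_connected_induce (U := {a}) (hc.connected ha) ⟨a, .inl rfl, rfl⟩
    fun x ⟨_, hx⟩ y hy hxy => by
      obtain rfl : x = a := hx
      exact hy.elim (fun h => (hc.ne_of_adj hxy h.symm).elim) fun h => (hnadj y h hxy).elim
  exact ha (hsub (.inr hb) ▸ hb)

theorem IsKempeColoring.adj_of_singleton_class
    (hc : IsKempeColoring L c) {a b : α} (ha : ∀ x, c x = c a → x = a) (hab : a ≠ b) :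
    L.Adj a b := by
  obtain ⟨x, hx, hadj⟩ := hc.exists_adj ⟨a, rfl⟩ fun h => hab (ha b h).symm
  exact ha x hx ▸ hadj.symm

theorem IsKempeColoring.missing_unique (hc : IsKempeColoring L c) (hPQ : IsSeparation L P Q)
    (hP : Set.SurjOn c P .univ) (hQ : Set.SurjOn c Q .univ) :
    (c '' (P ∩ Q))ᶜ.Subsingleton := by
  intro i hi j hj
  by_contra hij
  have miss {a : α} (ha : a ∈ {a | c a = i ∨ c a = j}) (haP : a ∈ P) : a ∉ Q := fun haQ =>
    ha.elim (fun h => hi ⟨a, ⟨haP, haQ⟩, h⟩) fun h => hj ⟨a, ⟨haP, haQ⟩, h⟩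
  obtain ⟨a, haP, ha⟩ := hP (Set.mem_univ i)
  obtain ⟨b, hbQ, hb⟩ := hQ (Set.mem_univ i)
  have hsub := subset_of_connected_induce (U := P) (hc.connected hij) ⟨a, .inl ha, haP⟩
    fun x hx y _ hxy => by
      by_contra hyP
      exact hPQ.not_adj (miss hx.1 hx.2) hyP hxy
  exact miss (.inl hb) (hsub (.inl hb)) hbQ

theorem IsKempeColoring.card_le_ncard_image_add_one [Finite K] (hc : IsKempeColoring L c)
    (hPQ : IsSeparation L P Q) (hP : Set.SurjOn c P .univ) (hQ : Set.SurjOn c Q .univ) :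
    Nat.card K ≤ (c '' (P ∩ Q)).ncard + 1 := by
  have hle := Set.ncard_le_one_iff_subsingleton.2 (hc.missing_unique hPQ hP hQ)
  have hadd := Set.ncard_add_ncard_compl (c '' (P ∩ Q))
  omega

theorem exists_missing_color [Finite α] {S : Set α} (hS : S.ncard < Nat.card K) :
    ∃ j, j ∉ c '' S := by
  by_contra! h
  refine hS.not_ge ?_
  rw [← Set.ncard_univ, ← Set.eq_univ_of_forall h]
  exact Set.ncard_image_le

theorem IsKempeColoring.injOn_inter [Finite α] [Finite K] (hc : IsKempeColoring L c)
    (hPQ : IsSeparation L P Q) (hP : Set.SurjOn c P .univ) (hQ : Set.SurjOn c Q .univ)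
    (horder : (P ∩ Q).ncard < Nat.card K) : Set.InjOn c (P ∩ Q) := by
  have hle := hc.card_le_ncard_image_add_one hPQ hP hQ
  exact Set.injOn_of_ncard_image_eq (le_antisymm Set.ncard_image_le (by omega))

-- The Kempe chain of the colour of `s` and the colour missing on `P ∩ Q` leaves `P \ Q` only
-- through `s`.
theorem IsKempeColoring.exists_adj_diff [Finite α] [Finite K] (hc : IsKempeColoring L c)
    (hPQ : IsSeparation L P Q) (hP : Set.SurjOn c P .univ) (hQ : Set.SurjOn c Q .univ)
    (horder : (P ∩ Q).ncard < Nat.card K) {s : α} (hs : s ∈ P ∩ Q) :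
    ∃ a ∈ P \ Q, L.Adj a s := by
  by_contra! hno
  obtain ⟨j, hj⟩ := exists_missing_color (c := c) horder
  obtain ⟨a, haP, ha⟩ := hP (Set.mem_univ j)
  have haQ : a ∉ Q := fun haQ => hj ⟨a, ⟨haP, haQ⟩, ha⟩
  have hsj : c s ≠ j := fun h => hj ⟨s, hs, h⟩
  have hsub := subset_of_connected_induce (U := P \ Q) (hc.connected hsj) ⟨a, .inr ha, haP, haQ⟩
    fun x hx y hy hxy => by
      have hyP : y ∈ P := by
        by_contra hyP
        exact hPQ.not_adj hx.2.2 hyP hxy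
      refine ⟨hyP, fun hyQ => ?_⟩
      have hcy : c y = c s := hy.resolve_right fun h => hj ⟨y, ⟨hyP, hyQ⟩, h⟩
      have hys : y = s := hc.injOn_inter hPQ hP hQ horder ⟨hyP, hyQ⟩ hs hcy
      exact hno x hx.2 (hys ▸ hxy)
  exact (hsub (.inl rfl)).2 hs.2

/-- The torso of the side `P` of a separation `(P, Q)`: the subgraph induced by `P`, in which
`P ∩ Q` is made complete. -/
def torso (L : SimpleGraph α) (P Q : Set α) : SimpleGraph P where
  Adj a b := L.Adj a b ∨ a ≠ b ∧ a.1 ∈ Q ∧ b.1 ∈ Q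
  symm := ⟨fun _ _ h => h.imp (·.symm) fun h => ⟨h.1.symm, h.2.2, h.2.1⟩⟩
  loopless := ⟨fun _ h => h.elim L.irrefl fun h => h.1 rfl⟩

theorem IsKempeColoring.torso (hc : IsKempeColoring L c) (hPQ : IsSeparation L P Q)
    (hP : Set.SurjOn c P .univ) (hinj : Set.InjOn c (P ∩ Q)) :
    IsKempeColoring (torso L P Q) (fun a : P => c a) where
  ne_of_adj a b hab h := hab.elim (fun hab => hc.ne_of_adj hab h) fun ⟨hne, haQ, hbQ⟩ =>
    hne (Subtype.ext (hinj ⟨a.2, haQ⟩ ⟨b.2, hbQ⟩ h))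
  connected i j hij := by
    obtain ⟨a₀, ha₀P, ha₀⟩ := hP (Set.mem_univ i)
    refine connected_induce_of_forall_subset ⟨⟨a₀, ha₀P⟩, .inl ha₀⟩ fun U ⟨p, hp, hpU⟩ hU => ?_
    have hsub := subset_of_connected_induce
      (U := (↑) '' U ∪ {x | x ∉ P ∧ ∃ s ∈ U, s.1 ∈ Q ∧ (c s = i ∨ c s = j)})
      (hc.connected hij) ⟨p, hp, .inl ⟨p, hpU, rfl⟩⟩ ?_
    · rintro q hq
      obtain ⟨r, hr, hrq⟩ | h := hsub (show c q = i ∨ c q = j from hq)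
      · exact Subtype.ext hrq ▸ hr
      · exact (h.1 q.2).elim
    rintro _ ⟨ha, ⟨a, haU, rfl⟩ | ⟨haP, s, hsU, hsQ, hs⟩⟩ b hb hab
    · by_cases hbP : b ∈ P
      · exact .inl ⟨⟨b, hbP⟩, hU a ⟨ha, haU⟩ ⟨b, hbP⟩ hb (.inl hab), rfl⟩
      · have haQ : a.1 ∈ Q := by
          by_contra haQ
          exact hPQ.not_adj haQ hbP hab
        exact .inr ⟨hbP, a, haU, haQ, ha⟩
    · by_cases hbP : b ∈ P
      · have hbQ : b ∈ Q := by
          by_contra hbQ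
          exact hPQ.not_adj hbQ haP hab.symm
        by_cases hsb : s = ⟨b, hbP⟩
        · exact .inl ⟨s, hsU, congrArg Subtype.val hsb⟩
        · exact .inl ⟨⟨b, hbP⟩, hU s ⟨hs, hsU⟩ ⟨b, hbP⟩ hb (.inr ⟨hsb, hsQ, hbQ⟩), rfl⟩
      · exact .inr ⟨hbP, s, hsU, hsQ, hs⟩

theorem LinkedInto.minorModel_torso (hB : L.IsClique B)
    (h : LinkedInto (L.induce Q).spanningCoe (P ∩ Q) B) :
    ∃ D : P → Set α, MinorModel (torso L P Q) L D ∧ ∀ p, p.1 ∈ D p := by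
  classical
  obtain ⟨F, hF, hdisj, hsub⟩ := h.exists_linkage_subset Set.inter_subset_right
  have piece_inter {p q : α} (hp : p ∈ P ∩ Q) (hq : q ∈ P) (hqF : q ∈ F p) : q = p :=
    have hqQ : q ∈ P ∩ Q := ⟨hq, hsub p hp hqF⟩
    hdisj.elim_set hqQ hp q (hF q hqQ).1 hqF
  let D (p : P) : Set α := if p.1 ∈ Q then F p else {p.1}
  have D_of_mem {p : P} (hp : p.1 ∈ Q) : D p = F p := if_pos hp
  have D_of_notMem {p : P} (hp : p.1 ∉ Q) : D p = {p.1} := if_neg hp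
  have mem_D (p : P) : p.1 ∈ D p := by
    by_cases hp : p.1 ∈ Q
    · exact D_of_mem hp ▸ (hF p ⟨p.2, hp⟩).1
    · exact D_of_notMem hp ▸ rfl
  have eq_or_mem {p : P} {a : α} (ha : a ∈ D p) : a = p ∨ p.1 ∈ Q ∧ a ∈ F p := by
    by_cases hp : p.1 ∈ Q
    · exact .inr ⟨hp, D_of_mem hp ▸ ha⟩
    · exact .inl (by rwa [D_of_notMem hp] at ha)
  refine ⟨D, ⟨fun p => ?_, fun p q hpq => Set.disjoint_left.2 fun a hap haq => hpq (Subtype.ext ?_),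
    fun p q hpq => ?_⟩, mem_D⟩
  · by_cases hp : p.1 ∈ Q
    · exact D_of_mem hp ▸ (hF p ⟨p.2, hp⟩).2.1
    · exact D_of_notMem hp ▸ connected_induce_singleton L p.1
  · rcases eq_or_mem hap, eq_or_mem haq with ⟨rfl | ⟨hp, hap⟩, h | ⟨hq, haq⟩⟩
    · exact h
    · exact piece_inter ⟨q.2, hq⟩ p.2 haq
    · exact (piece_inter ⟨p.2, hp⟩ q.2 (h ▸ hap)).symm
    · exact hdisj.elim_set ⟨p.2, hp⟩ ⟨q.2, hq⟩ a hap haq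
  · obtain hpq | ⟨hne, hp, hq⟩ := hpq
    · exact ⟨p, mem_D p, q, mem_D q, hpq⟩
    · obtain ⟨a, haB, ha⟩ := (hF p ⟨p.2, hp⟩).2.2
      obtain ⟨b, hbB, hb⟩ := (hF q ⟨q.2, hq⟩).2.2
      have hab : a ≠ b :=
        (hdisj ⟨p.2, hp⟩ ⟨q.2, hq⟩ (Subtype.coe_ne_coe.2 hne)).ne_of_mem ha hb
      exact ⟨a, D_of_mem hp ▸ ha, b, D_of_mem hq ▸ hb, hB haB hbB hab⟩

theorem IsKempeColoring.rootedCompleteMinor_or_exists_separation [Finite α] [Finite K]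
    (hc : IsKempeColoring L c) (ht : Function.LeftInverse c t) (hB : L.IsClique B)
    (hcB : Set.SurjOn c B .univ) :
    RootedCompleteMinor L t ∨ ∃ P Q, IsSeparation L P Q ∧ Set.range t ⊆ P ∧ B ⊆ Q ∧
      (P ∩ Q).ncard < Nat.card K ∧ LinkedInto (L.induce Q).spanningCoe (P ∩ Q) B := by
  have hct : Set.SurjOn c (Set.range t) .univ := fun i _ => ⟨t i, ⟨i, rfl⟩, ht i⟩
  have order_ge : SeparationOrderGE L (Set.range t) B (Nat.card K - 1) := fun P Q hPQ htP hBQ => by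
    have hle := hc.card_le_ncard_image_add_one hPQ (hct.mono htP subset_rfl)
      (hcB.mono hBQ subset_rfl)
    have hle' : (c '' (P ∩ Q)).ncard ≤ (P ∩ Q).ncard := Set.ncard_image_le
    omega
  by_cases horder : SeparationOrderGE L (Set.range t) B (Set.range t).ncard
  · exact .inl (horder.linkedInto.rootedCompleteMinor ht.injective hB)
  simp only [SeparationOrderGE, not_forall, not_le, ← Nat.card_coe_set_eq (Set.range t),
    Nat.card_range_of_injective ht.injective] at horder
  obtain ⟨P, Q, hPQ, htP, hBQ, hlt⟩ := horder
  have hcard : (P ∩ Q).ncard = Nat.card K - 1 :=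
    le_antisymm (Nat.le_sub_one_of_lt hlt) (order_ge P Q hPQ htP hBQ)
  exact .inr ⟨P, Q, hPQ, htP, hBQ, hlt,
    (hcard.symm ▸ order_ge.induce_right hPQ htP hBQ : SeparationOrderGE _ _ _ _).linkedInto⟩

end Kempe

/-! ### Kempe colourings of line graphs: contracting a separation at a full vertex -/

namespace Multigraph

variable {V E K : Type*} {G : Multigraph V E} {c : E → K} {t : K → E} {P Q : Set E}

/-- The line graph of `G`; parallel edges of `G` are adjacent in it. -/
def lineGraph (G : Multigraph V E) : SimpleGraph E where
  Adj e f := e ≠ f ∧ ∃ v, v ∈ G.ends e ∧ v ∈ G.ends f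
  symm := ⟨fun _ _ ⟨hne, v, he, hf⟩ => ⟨hne.symm, v, hf, he⟩⟩
  loopless := ⟨fun _ h => h.1 rfl⟩

/-- The set of endpoints of the edges in `F`. -/
def vertexSet (G : Multigraph V E) (F : Set E) : Set V := {v | ∃ e ∈ F, v ∈ G.ends e}

/-- A vertex incident with an edge of each colour. -/
def IsFull (G : Multigraph V E) (c : E → K) (v : V) : Prop := ∀ i, v ∈ G.vertexSet (c ⁻¹' {i})

theorem exists_mem_ends (G : Multigraph V E) (e : E) : ∃ v, v ∈ G.ends e :=
  ⟨_, (G.ends e).out_fst_mem⟩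

theorem exists_ends_eq_of_mem {e : E} {x : V} (hx : x ∈ G.ends e) :
    ∃ y, y ≠ x ∧ G.ends e = s(x, y) := by
  obtain ⟨y, hy⟩ := Sym2.mem_iff_exists.1 hx
  exact ⟨y, fun hyx => G.not_isDiag e (by simp [hy, hyx]), hy⟩

theorem isClique_lineGraph_setOf_mem (v : V) : G.lineGraph.IsClique {e | v ∈ G.ends e} :=
  fun _ he _ hf hne => ⟨hne, v, he, hf⟩

theorem IsFull.surjOn {v : V} (hv : G.IsFull c v) : Set.SurjOn c {e | v ∈ G.ends e} .univ :=
  fun i _ => let ⟨e, he, hve⟩ := hv i; ⟨e, hve, he⟩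

open Classical in
/-- The map contracting `N` to the single new vertex `none`. -/
noncomputable def contractVertex (N : Set V) (v : V) : Option V := if v ∈ N then none else some v

theorem contractVertex_eq_iff {N : Set V} {v w : V} :
    contractVertex N v = contractVertex N w ↔ v = w ∨ v ∈ N ∧ w ∈ N := by
  unfold contractVertex
  split_ifs <;> grind

/-- The multigraph obtained by contracting all endpoints of edges outside `P` to one vertex. -/
noncomputable def contract (G : Multigraph V E) (P : Set E)
    (hP : ∀ e ∈ P, ∃ v ∈ G.ends e, v ∉ G.vertexSet Pᶜ) :
    Multigraph (Option V) P where
  ends e := (G.ends e).map (contractVertex (G.vertexSet Pᶜ))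
  not_isDiag e := by
    obtain ⟨v, hv, hvP⟩ := hP e e.2
    obtain ⟨w, hwv, hw⟩ := exists_ends_eq_of_mem hv
    rw [hw, Sym2.map_mk, Sym2.mk_isDiag_iff, contractVertex_eq_iff]
    exact fun h => h.elim hwv.symm fun h => hvP h.1

theorem notMem_vertexSet_compl (hPQ : IsSeparation G.lineGraph P Q) {e : E} (he : e ∉ Q) {v : V}
    (hv : v ∈ G.ends e) : v ∉ G.vertexSet Pᶜ := fun ⟨_, hfP, hvf⟩ =>
  hPQ.not_adj he hfP
    ⟨fun hef => hfP (hef ▸ (hPQ.mem_or_mem e).resolve_right he), v, hv, hvf⟩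

theorem exists_mem_ends_notMem_vertexSet_compl (hPQ : IsSeparation G.lineGraph P Q)
    (hinner : ∀ s ∈ P ∩ Q, ∃ a ∈ P \ Q, G.lineGraph.Adj a s) (e : E) (he : e ∈ P) :
    ∃ v ∈ G.ends e, v ∉ G.vertexSet Pᶜ := by
  by_cases heQ : e ∈ Q
  · obtain ⟨a, ha, -, v, hva, hve⟩ := hinner e ⟨he, heQ⟩
    exact ⟨v, hve, notMem_vertexSet_compl hPQ ha.2 hva⟩
  · obtain ⟨v, hv⟩ := G.exists_mem_ends e
    exact ⟨v, hv, notMem_vertexSet_compl hPQ heQ hv⟩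

theorem torso_lineGraph (hPQ : IsSeparation G.lineGraph P Q)
    (hP : ∀ e ∈ P, ∃ v ∈ G.ends e, v ∉ G.vertexSet Pᶜ)
    (houter : ∀ s ∈ P ∩ Q, ∃ b ∉ P, G.lineGraph.Adj b s) :
    torso G.lineGraph P Q = (G.contract P hP).lineGraph := by
  ext p q
  have exists_outer {e : P} (he : e.1 ∈ Q) : ∃ v ∈ G.ends e, v ∈ G.vertexSet Pᶜ := by
    obtain ⟨b, hb, -, v, hvb, hve⟩ := houter e ⟨e.2, he⟩
    exact ⟨v, hve, b, hb, hvb⟩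
  simp only [torso, lineGraph, contract, Sym2.mem_map]
  constructor
  · rintro (⟨hne, v, hvp, hvq⟩ | ⟨hne, hpQ, hqQ⟩)
    · exact ⟨fun h => hne (h ▸ rfl), _, ⟨v, hvp, rfl⟩, v, hvq, rfl⟩
    · obtain ⟨v, hvp, hv⟩ := exists_outer hpQ
      obtain ⟨w, hwq, hw⟩ := exists_outer hqQ
      exact ⟨hne, _, ⟨v, hvp, rfl⟩, w, hwq, contractVertex_eq_iff.2 (.inr ⟨hw, hv⟩)⟩
  · rintro ⟨hne, -, ⟨v, hvp, rfl⟩, w, hwq, hwv⟩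
    obtain rfl | ⟨hw, hv⟩ := contractVertex_eq_iff.1 hwv
    · exact .inl ⟨Subtype.coe_ne_coe.2 hne, w, hvp, hwq⟩
    · refine .inr ⟨hne, ?_, ?_⟩
      · by_contra hpQ
        exact notMem_vertexSet_compl hPQ hpQ hvp hv
      · by_contra hqQ
        exact notMem_vertexSet_compl hPQ hqQ hwq hw

theorem IsFull.rootedCompleteMinor_or_exists_contract [Finite E] [Finite K] {v : V}
    (hv : G.IsFull c v) (hc : IsKempeColoring G.lineGraph c) (ht : Function.LeftInverse c t) :
    RootedCompleteMinor G.lineGraph t ∨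
      ∃ (P : Set E) (G' : Multigraph (Option V) P) (D : P → Set E), P ≠ .univ ∧
        Set.range t ⊆ P ∧ IsKempeColoring G'.lineGraph (fun e => c e) ∧
        MinorModel G'.lineGraph G.lineGraph D ∧ ∀ e, e.1 ∈ D e := by
  have hB : G.lineGraph.IsClique {e | v ∈ G.ends e} := isClique_lineGraph_setOf_mem v
  refine (hc.rootedCompleteMinor_or_exists_separation ht hB hv.surjOn).imp_right ?_
  rintro ⟨P, Q, hPQ, htP, hBQ, horder, hlink⟩
  have hP : Set.SurjOn c P .univ := fun i _ => ⟨t i, htP ⟨i, rfl⟩, ht i⟩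
  have hQ : Set.SurjOn c Q .univ := hv.surjOn.mono hBQ subset_rfl
  have hinj := hc.injOn_inter hPQ hP hQ horder
  have hinner := exists_mem_ends_notMem_vertexSet_compl hPQ
    fun s hs => hc.exists_adj_diff hPQ hP hQ horder hs
  have houter (s : E) (hs : s ∈ P ∩ Q) : ∃ b ∉ P, G.lineGraph.Adj b s := by
    rw [Set.inter_comm] at horder hs
    obtain ⟨b, hb, hbs⟩ := hc.exists_adj_diff hPQ.symm hQ hP horder hs
    exact ⟨b, hb.2, hbs⟩
  have htorso := torso_lineGraph hPQ hinner houter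
  obtain ⟨D, hD, hmem⟩ := hlink.minorModel_torso hB
  refine ⟨P, G.contract P hinner, D, ?_, htP, htorso ▸ hc.torso hPQ hP hinj, htorso ▸ hD, hmem⟩
  rintro rfl
  obtain ⟨j, hj⟩ := exists_missing_color (c := c) horder
  obtain ⟨e, he, rfl⟩ := hQ (Set.mem_univ j)
  exact hj ⟨e, ⟨trivial, he⟩, rfl⟩

theorem exists_mem_of_singleton_class (hc : IsKempeColoring G.lineGraph c) {e : E}
    (he : ∀ f, c f = c e → f = e) (f : E) : ∃ v, v ∈ G.ends e ∧ v ∈ G.ends f := by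
  by_cases hef : e = f
  · obtain ⟨v, hv⟩ := G.exists_mem_ends e
    exact ⟨v, hv, hef ▸ hv⟩
  · exact (hc.adj_of_singleton_class he hef).2

theorem eq_of_color_eq_of_mem (hc : IsKempeColoring G.lineGraph c) {e f : E} (hef : c e = c f)
    {v : V} (he : v ∈ G.ends e) (hf : v ∈ G.ends f) : e = f := by
  by_contra hne
  exact hc.ne_of_adj ⟨hne, v, he, hf⟩ hef

-- All edges of a colour missing at `x` contain `y`, because they meet `xy`.
theorem exists_singleton_class_of_not_isFull (hc : IsKempeColoring G.lineGraph c)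
    (ht : Function.LeftInverse c t) {x y : V} {e : E} (he : ∀ f, c f = c e → f = e)
    (hxy : G.ends e = s(x, y)) (hx : ¬ G.IsFull c x) :
    ∃ e', (∀ f, c f = c e' → f = e') ∧ x ∉ G.ends e' ∧ y ∈ G.ends e' := by
  obtain ⟨l, hl⟩ := not_forall.1 hx
  have notMem {f : E} (hf : c f = l) : x ∉ G.ends f := fun hxf => hl ⟨f, hf, hxf⟩
  have mem {f : E} (hf : c f = l) : y ∈ G.ends f := by
    obtain ⟨v, hve, hvf⟩ := exists_mem_of_singleton_class hc he f
    rw [hxy, Sym2.mem_iff] at hve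
    rcases hve with rfl | rfl
    · exact (notMem hf hvf).elim
    · exact hvf
  exact ⟨t l, fun f hf => eq_of_color_eq_of_mem hc hf (mem (hf.trans (ht l))) (mem (ht l)),
    notMem (ht l), mem (ht l)⟩

theorem lineGraph_eq_top_of_singleton_class (hc : IsKempeColoring G.lineGraph c)
    (ht : Function.LeftInverse c t) (hfull : ∀ v, ¬ G.IsFull c v) {e : E}
    (he : ∀ f, c f = c e → f = e) : G.lineGraph = ⊤ := by
  obtain ⟨x, hx⟩ := G.exists_mem_ends e
  obtain ⟨y, -, hxy⟩ := exists_ends_eq_of_mem hx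
  obtain ⟨e₁, he₁, hx₁, hy₁⟩ := exists_singleton_class_of_not_isFull hc ht he hxy (hfull x)
  obtain ⟨e₂, he₂, hy₂, hx₂⟩ :=
    exists_singleton_class_of_not_isFull hc ht he (hxy.trans Sym2.eq_swap) (hfull y)
  obtain ⟨z, hz₁, hz₂⟩ := exists_mem_of_singleton_class hc he₁ e₂
  have hyz : G.ends e₁ = s(y, z) :=
    (Sym2.mem_and_mem_iff fun h : y = z => hy₂ (h ▸ hz₂)).1 ⟨hy₁, hz₁⟩
  have hxz : G.ends e₂ = s(x, z) :=
    (Sym2.mem_and_mem_iff fun h : x = z => hx₁ (h ▸ hz₁)).1 ⟨hx₂, hz₂⟩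
  have two_of_three (f : E) : (x ∈ G.ends f ∨ y ∈ G.ends f) ∧ (y ∈ G.ends f ∨ z ∈ G.ends f) ∧
      (x ∈ G.ends f ∨ z ∈ G.ends f) := by
    refine ⟨?_, ?_, ?_⟩
    · simpa [hxy, or_and_right, exists_or] using exists_mem_of_singleton_class hc he f
    · simpa [hyz, or_and_right, exists_or] using exists_mem_of_singleton_class hc he₁ f
    · simpa [hxz, or_and_right, exists_or] using exists_mem_of_singleton_class hc he₂ f
  refine top_unique fun f g hfg => ⟨hfg, ?_⟩
  grind [two_of_three f, two_of_three g]

end Multigraph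

/-! ### A counting lemma for set families with small symmetric differences -/

section Counting

open Finset
open scoped symmDiff

variable {V K : Type*} [DecidableEq V] [Fintype K] {S : K → Finset V} {W : Finset V}

theorem sum_card_symmDiff_eq (hSW : ∀ i, S i ⊆ W) (i : K) :
    ∑ j, #(S i ∆ S j) = ∑ v ∈ W, if v ∈ S i then #{j | v ∉ S j} else #{j | v ∈ S j} := by
  have hdiff (j : K) : S i ∆ S j = {v ∈ W | v ∈ S i ∆ S j} := by
    rw [filter_mem_eq_inter, inter_eq_right.2]
    exact fun v hv => (mem_symmDiff.1 hv).elim (fun h => hSW i h.1) fun h => hSW j h.1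
  calc ∑ j, #(S i ∆ S j) = ∑ j, #{v ∈ W | v ∈ S i ∆ S j} :=
        sum_congr rfl fun j _ => congrArg card (hdiff j)
    _ = ∑ v ∈ W, #{j | v ∈ S i ∆ S j} :=
        (sum_card_bipartiteAbove_eq_sum_card_bipartiteBelow fun v j => v ∈ S i ∆ S j).symm
    _ = _ := sum_congr rfl fun v _ => by split_ifs with hv <;> simp [mem_symmDiff, hv]

theorem sum_sum_card_symmDiff_eq (hSW : ∀ i, S i ⊆ W) :
    ∑ i, ∑ j, #(S i ∆ S j) = 2 * ∑ v ∈ W, #{j | v ∈ S j} * #{j | v ∉ S j} := by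
  simp_rw [sum_card_symmDiff_eq hSW]
  rw [sum_comm, mul_sum]
  refine sum_congr rfl fun v _ => ?_
  rw [sum_ite, sum_const, sum_const, smul_eq_mul, smul_eq_mul]
  ring

theorem sum_card_symmDiff_le (hS : ∀ i j, i ≠ j → #(S i ∆ S j) ≤ 2) (i : K) :
    ∑ j, #(S i ∆ S j) ≤ 2 * (Fintype.card K - 1) := by
  classical
  calc ∑ j, #(S i ∆ S j) = ∑ j ∈ univ.erase i, #(S i ∆ S j) := by
        rw [← add_sum_erase _ _ (mem_univ i)]; simp
    _ ≤ #(univ.erase i) • 2 := sum_le_card_nsmul _ _ _ fun j hj => hS i j (ne_of_mem_erase hj).symm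
    _ = 2 * (Fintype.card K - 1) := by simp [card_erase_of_mem, mul_comm]

theorem sum_card_mul_card_le (hSW : ∀ i, S i ⊆ W) (hS : ∀ i j, i ≠ j → #(S i ∆ S j) ≤ 2) :
    ∑ v ∈ W, #{j | v ∈ S j} * #{j | v ∉ S j} ≤ Fintype.card K * (Fintype.card K - 1) := by
  have hsum := sum_le_card_nsmul univ _ _ fun i _ => sum_card_symmDiff_le hS i
  rw [sum_sum_card_symmDiff_eq hSW, card_univ, smul_eq_mul] at hsum
  linarith

theorem card_mem_add_card_notMem (S : K → Finset V) (v : V) :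
    #{j | v ∈ S j} + #{j | v ∉ S j} = Fintype.card K :=
  card_filter_add_card_filter_not fun j => v ∈ S j

theorem card_le_of_card_symmDiff_le_two [Nonempty K] (hSW : ∀ i, S i ⊆ W)
    (hS : ∀ i j, i ≠ j → #(S i ∆ S j) ≤ 2) (hfour : ∀ i, 4 ≤ #(S i))
    (htwo : ∀ v ∈ W, 2 ≤ #{j | v ∈ S j}) (hlt : ∀ v ∈ W, #{j | v ∈ S j} < #W) :
    Fintype.card K ≤ #W := by
  by_contra! hcard
  obtain ⟨q, hq⟩ : ∃ q, #W + (q + 1) = Fintype.card K := ⟨Fintype.card K - #W - 1, by lia⟩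
  have hmiss : ∀ v ∈ W, q + 2 ≤ #{j | v ∉ S j} := fun v hv => by
    have := card_mem_add_card_notMem S v
    have := hlt v hv
    lia
  obtain ⟨i⟩ := ‹Nonempty K›
  have hiW := card_le_card (hSW i)
  have hq0 : q = 0 := by
    have hsum : #(S i) * (q + 2) + #(W \ S i) * 2 ≤ 2 * (#W + q) := by
      calc #(S i) * (q + 2) + #(W \ S i) * 2 = ∑ v ∈ W, if v ∈ S i then q + 2 else 2 := by
            simp [sum_ite, ← sdiff_eq_filter, filter_mem_eq_inter, inter_eq_right.2 (hSW i)]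
        _ ≤ ∑ v ∈ W, if v ∈ S i then #{j | v ∉ S j} else #{j | v ∈ S j} :=
            sum_le_sum fun v hv => by split_ifs; exacts [hmiss v hv, htwo v hv]
        _ ≤ 2 * (#W + q) := by
            rw [← sum_card_symmDiff_eq hSW i, show #W + q = Fintype.card K - 1 by lia]
            exact sum_card_symmDiff_le hS i
    rw [card_sdiff_of_subset (hSW i)] at hsum
    have : #(S i) * q ≤ 2 * q := by lia
    nlinarith [hfour i]
  subst hq0
  have hprod : ∀ v ∈ W, 2 * (#W - 1) ≤ #{j | v ∈ S j} * #{j | v ∉ S j} := fun v hv => by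
    have := card_mem_add_card_notMem S v
    obtain ⟨a, ha⟩ := Nat.exists_eq_add_of_le (htwo v hv)
    obtain ⟨b, hb⟩ := Nat.exists_eq_add_of_le (hmiss v hv)
    rw [show #W - 1 = a + b + 2 by lia, ha, hb]
    nlinarith
  have hsum := (card_nsmul_le_sum W _ _ hprod).trans (sum_card_mul_card_le hSW hS)
  obtain ⟨m, hm⟩ := Nat.exists_eq_add_of_le ((hfour i).trans hiW)
  rw [← hq, hm, smul_eq_mul, show 4 + m - 1 = m + 3 by lia,
    show 4 + m + (0 + 1) - 1 = m + 4 by lia] at hsum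
  nlinarith

theorem card_eq_of_card_symmDiff_le_two [Nonempty K] (hSW : ∀ i, S i ⊆ W)
    (hS : ∀ i j, i ≠ j → #(S i ∆ S j) ≤ 2) (hfour : ∀ i, 4 ≤ #(S i))
    (htwo : ∀ v ∈ W, 2 ≤ #{j | v ∈ S j}) (hlt : ∀ v ∈ W, #{j | v ∈ S j} < #W)
    (hmiss : ∀ v ∈ W, ∃ j, v ∉ S j) :
    #W = Fintype.card K ∧ ∀ v ∈ W, #{j | v ∈ S j} + 1 = #W := by
  have hprod : ∀ v ∈ W, Fintype.card K - 1 ≤ #{j | v ∈ S j} * #{j | v ∉ S j} ∧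
      (Fintype.card K - 1 = #{j | v ∈ S j} * #{j | v ∉ S j} → #{j | v ∉ S j} = 1) := fun v hv => by
    have hsum := card_mem_add_card_notMem S v
    obtain ⟨j, hj⟩ := hmiss v hv
    have hpos : 0 < #{j | v ∉ S j} := card_pos.2 ⟨j, by simpa using hj⟩
    obtain ⟨a, ha⟩ := Nat.exists_eq_add_of_le (htwo v hv)
    obtain ⟨b, hb⟩ := Nat.exists_eq_add_of_le hpos
    rw [show Fintype.card K - 1 = a + b + 2 by lia, ha, hb]
    exact ⟨by nlinarith, fun h => by nlinarith⟩
  have hle := card_le_of_card_symmDiff_le_two hSW hS hfour htwo hlt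
  have hsum := sum_card_mul_card_le hSW hS
  obtain ⟨i⟩ := ‹Nonempty K›
  have hcard : #W = Fintype.card K := by
    refine le_antisymm ?_ hle
    have := (card_nsmul_le_sum W _ _ fun v hv => (hprod v hv).1).trans hsum
    refine Nat.le_of_mul_le_mul_right this ?_
    obtain ⟨v, hv⟩ := card_pos.1 ((by norm_num : 0 < 4).trans_le (hfour i))
    have := htwo v (hSW i hv)
    have := card_le_univ ({j | v ∈ S j} : Finset K)
    lia
  refine ⟨hcard, fun v hv => ?_⟩
  have heq := (sum_eq_sum_iff_of_le fun v hv => (hprod v hv).1).1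
    (le_antisymm (sum_le_sum fun v hv => (hprod v hv).1)
      (by rwa [sum_const, smul_eq_mul, hcard])) v hv
  have := card_mem_add_card_notMem S v
  have := (hprod v hv).2 heq
  lia

end Counting

/-! ### Graphs without full vertices and singleton colour classes -/

namespace Multigraph

variable {V E K : Type*} {G : Multigraph V E} {c : E → K}

theorem vertexSet_mono {F F' : Set E} (h : F ⊆ F') : G.vertexSet F ⊆ G.vertexSet F' :=
  fun _ ⟨e, he, hv⟩ => ⟨e, h he, hv⟩

theorem vertexSet_union (F F' : Set E) :
    G.vertexSet (F ∪ F') = G.vertexSet F ∪ G.vertexSet F' := by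
  ext v
  simp only [vertexSet, Set.mem_union, Set.mem_ofPred_eq, or_and_right, exists_or]

theorem vertexSet_singleton (e : E) : G.vertexSet {e} = {v | v ∈ G.ends e} := by
  ext v
  simp only [vertexSet, Set.mem_singleton_iff, exists_eq_left, Set.mem_ofPred_eq]

theorem exists_vertexSet_singleton_eq_pair (G : Multigraph V E) (e : E) :
    ∃ x y, x ≠ y ∧ G.vertexSet {e} = {x, y} := by
  obtain ⟨x, hx⟩ := G.exists_mem_ends e
  obtain ⟨y, hyx, hxy⟩ := exists_ends_eq_of_mem hx
  refine ⟨x, y, hyx.symm, ?_⟩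
  ext v
  rw [vertexSet_singleton, Set.mem_ofPred_eq, hxy, Sym2.mem_iff, Set.mem_insert_iff,
    Set.mem_singleton_iff]

theorem ncard_vertexSet_singleton (G : Multigraph V E) (e : E) :
    (G.vertexSet {e}).ncard = 2 :=
  Set.ncard_eq_two.2 (G.exists_vertexSet_singleton_eq_pair e)

theorem finite_vertexSet [Finite E] (G : Multigraph V E) (F : Set E) :
    (G.vertexSet F).Finite := by
  have hunion : G.vertexSet F = ⋃ e ∈ F, G.vertexSet {e} := by
    ext v
    simp only [vertexSet, Set.mem_iUnion, exists_prop, Set.mem_singleton_iff, exists_eq_left,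
      Set.mem_ofPred_eq]
  rw [hunion]
  exact F.toFinite.biUnion fun e _ =>
    Set.finite_of_ncard_pos (by rw [ncard_vertexSet_singleton]; norm_num)

theorem two_mul_ncard_le_ncard_vertexSet [Finite E] {M : Set E} (hM : G.Matching M) :
    2 * M.ncard ≤ (G.vertexSet M).ncard := by
  induction M, M.toFinite using Set.Finite.induction_on with
  | empty => simp
  | @insert e M heM hfin ih =>
    have hdisj : Disjoint (G.vertexSet {e}) (G.vertexSet M) := by
      refine Set.disjoint_left.2 fun v hv ⟨f, hf, hvf⟩ => ?_
      rw [vertexSet_singleton] at hv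
      exact hM e (.inl rfl) f (.inr hf) (fun hef => heM (hef ▸ hf)) ⟨v, hv, hvf⟩
    have ih := ih fun f hf g hg => hM f (.inr hf) g (.inr hg)
    rw [Set.insert_eq, vertexSet_union, Set.ncard_union_eq hdisj (G.finite_vertexSet _)
      (G.finite_vertexSet _), ← Set.insert_eq, Set.ncard_insert_of_notMem heM hfin,
      ncard_vertexSet_singleton]
    lia

theorem ncard_vertexSet_insert_le [Finite E] {F : Set E} {e f : E} (hf : f ∈ F)
    (hef : G.lineGraph.Adj f e) :
    (G.vertexSet (insert e F)).ncard ≤ (G.vertexSet F).ncard + 1 := by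
  obtain ⟨-, v, hvf, hve⟩ := hef
  obtain ⟨w, -, hvw⟩ := exists_ends_eq_of_mem hve
  have hsub : G.vertexSet (insert e F) ⊆ insert w (G.vertexSet F) := by
    rintro u ⟨g, rfl | hg, hu⟩
    · rw [hvw, Sym2.mem_iff] at hu
      exact hu.elim (fun h => .inr ⟨f, hf, h ▸ hvf⟩) .inl
    · exact .inr ⟨g, hg, hu⟩
  exact (Set.ncard_le_ncard hsub ((G.finite_vertexSet F).insert w)).trans (Set.ncard_insert_le _ _)

theorem ncard_vertexSet_le_of_connected [Finite E] {F : Set E}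
    (hF : (G.lineGraph.induce F).Connected) : (G.vertexSet F).ncard ≤ F.ncard + 1 := by
  obtain ⟨⟨e, he⟩⟩ := hF.nonempty
  obtain ⟨U, heU, ⟨hUF, hU⟩, hmax⟩ := (Set.toFinite _).exists_le_maximal
    (s := {U | U ⊆ F ∧ (G.vertexSet U).ncard ≤ U.ncard + 1})
    ⟨Set.singleton_subset_iff.2 he, by simp [ncard_vertexSet_singleton]⟩
  have hFU : F ⊆ U := by
    refine subset_of_connected_induce hF ⟨e, he, heU rfl⟩ fun f hf g hg hfg => ?_
    by_contra hgU
    refine hgU (hmax ⟨Set.insert_subset hg hUF, ?_⟩ (Set.subset_insert g U) (.inl rfl))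
    rw [Set.ncard_insert_of_notMem hgU]
    exact (ncard_vertexSet_insert_le hf.2 hfg).trans (Nat.succ_le_succ hU)
  rwa [hUF.antisymm hFU] at hU

theorem matching_colorClass (hc : IsKempeColoring G.lineGraph c) (i : K) :
    G.Matching (c ⁻¹' {i}) := fun _ he _ hf hef hv =>
  hc.ne_of_adj ⟨hef, hv⟩ (Eq.trans he (Eq.symm hf))

open scoped symmDiff in
theorem ncard_symmDiff_vertexSet_le_two [Finite E] (hc : IsKempeColoring G.lineGraph c) {i j : K}
    (hij : i ≠ j) : (G.vertexSet (c ⁻¹' {i}) ∆ G.vertexSet (c ⁻¹' {j})).ncard ≤ 2 := by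
  have finite := G.finite_vertexSet
  have hunion := ncard_vertexSet_le_of_connected (hc.connected hij)
  change (G.vertexSet (c ⁻¹' {i} ∪ c ⁻¹' {j})).ncard ≤ (c ⁻¹' {i} ∪ c ⁻¹' {j}).ncard + 1 at hunion
  rw [vertexSet_union] at hunion
  have := Set.ncard_union_le (c ⁻¹' {i}) (c ⁻¹' {j})
  have := two_mul_ncard_le_ncard_vertexSet (matching_colorClass hc i)
  have := two_mul_ncard_le_ncard_vertexSet (matching_colorClass hc j)
  have := Set.ncard_union_add_ncard_inter _ _ (finite (c ⁻¹' {i})) (finite (c ⁻¹' {j}))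
  have := Set.ncard_sdiff_add_ncard_of_subset
    (Set.inter_subset_left.trans Set.subset_union_left :
      G.vertexSet (c ⁻¹' {i}) ∩ G.vertexSet (c ⁻¹' {j}) ⊆
        G.vertexSet (c ⁻¹' {i}) ∪ G.vertexSet (c ⁻¹' {j})) ((finite _).union (finite _))
  rw [symmDiff_eq_sup_sdiff_inf]
  change Set.ncard ((_ ∪ _) \ (_ ∩ _)) ≤ 2
  lia

theorem ends_injective (hc : IsKempeColoring G.lineGraph c) (hclass : ∀ e, ∃ f, c f = c e ∧ f ≠ e) :
    Function.Injective G.ends := by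
  intro e f hef
  by_contra hne
  obtain ⟨v, hv⟩ := G.exists_mem_ends e
  have hcolor : c e ≠ c f := hc.ne_of_adj ⟨hne, v, hv, hef ▸ hv⟩
  obtain ⟨g, hgc, hge⟩ := hclass e
  have hsub := subset_of_connected_induce (U := {e, f}) (hc.connected hcolor)
    ⟨e, .inl rfl, .inl rfl⟩ fun a ⟨_, ha⟩ b hb ⟨_, w, hwa, hwb⟩ => by
      have hwe : w ∈ G.ends e := ha.elim (fun h => h ▸ hwa) fun h => hef ▸ h ▸ hwa
      exact hb.imp (fun h => eq_of_color_eq_of_mem hc h hwb hwe)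
        fun h => eq_of_color_eq_of_mem hc h hwb (hef ▸ hwe)
  rcases hsub (.inl hgc) with rfl | rfl
  · exact hge rfl
  · exact hcolor hgc.symm

/-- The set of vertices joined to `v` by an edge. -/
def neighborSet (G : Multigraph V E) (v : V) : Set V := {w | ∃ e, G.ends e = s(v, w)}

theorem neighborSet_subset (G : Multigraph V E) (v : V) :
    G.neighborSet v ⊆ G.vertexSet .univ \ {v} := fun w ⟨e, he⟩ =>
  ⟨⟨e, trivial, he ▸ Sym2.mem_mk_right v w⟩,
    fun h => G.not_isDiag e (he ▸ Sym2.mk_isDiag_iff.2 (Eq.symm h))⟩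

theorem ncard_setOf_mem_ends (hends : Function.Injective G.ends) (v : V) :
    {e | v ∈ G.ends e}.ncard = (G.neighborSet v).ncard := by
  rw [← Set.ncard_image_of_injective _ hends,
    ← Set.ncard_image_of_injective _ (fun _ _ => Sym2.congr_right.1 : Function.Injective (s(v, ·)))]
  congr 1
  ext z
  constructor
  · rintro ⟨e, he, rfl⟩
    obtain ⟨w, hw⟩ := Sym2.mem_iff_exists.1 he
    exact ⟨w, ⟨e, hw⟩, hw.symm⟩
  · rintro ⟨w, ⟨e, he⟩, rfl⟩
    exact ⟨e, Sym2.mem_iff_exists.2 ⟨w, he⟩, he⟩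

theorem ncard_setOf_mem_vertexSet_colorClass (hc : IsKempeColoring G.lineGraph c) (v : V) :
    {i | v ∈ G.vertexSet (c ⁻¹' {i})}.ncard = {e | v ∈ G.ends e}.ncard := by
  rw [← (hc.injOn_of_isClique (isClique_lineGraph_setOf_mem v)).ncard_image]
  congr 1
  ext i
  exact exists_congr fun e => and_comm

theorem exists_color_ne_of_mem_ends (hc : IsKempeColoring G.lineGraph c)
    (hsurj : Function.Surjective c) (hfull : ∀ v, ¬ G.IsFull c v) {v : V} {e : E}
    (hv : v ∈ G.ends e) : ∃ f, v ∈ G.ends f ∧ c f ≠ c e := by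
  by_contra! honly
  obtain ⟨w, -, hvw⟩ := exists_ends_eq_of_mem hv
  refine hfull w fun i => ?_
  by_cases hi : c e = i
  · exact ⟨e, hi, hvw ▸ Sym2.mem_mk_right v w⟩
  · obtain ⟨f, rfl, -, u, hue, huf⟩ := hc.exists_adj (hsurj i) hi
    rw [hvw, Sym2.mem_iff] at hue
    rcases hue with rfl | rfl
    · exact (hi (honly f huf).symm).elim
    · exact ⟨f, rfl, huf⟩

theorem four_le_ncard_vertexSet_colorClass [Finite E] (hc : IsKempeColoring G.lineGraph c)
    (hclass : ∀ e, ∃ f, c f = c e ∧ f ≠ e) (e : E) : 4 ≤ (G.vertexSet (c ⁻¹' {c e})).ncard := by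
  obtain ⟨f, hf, hfe⟩ := hclass e
  have : 1 < (c ⁻¹' {c e}).ncard := (Set.one_lt_ncard (Set.toFinite _)).2 ⟨f, hf, e, rfl, hfe⟩
  have := two_mul_ncard_le_ncard_vertexSet (matching_colorClass hc (c e))
  lia

theorem ncard_neighborSet_of_forall_not_isFull [Finite E] [Nonempty K]
    (hc : IsKempeColoring G.lineGraph c) (hsurj : Function.Surjective c)
    (hclass : ∀ e, ∃ f, c f = c e ∧ f ≠ e) (hfull : ∀ v, ¬ G.IsFull c v) :
    (G.vertexSet .univ).ncard = Nat.card K ∧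
      ∀ v ∈ G.vertexSet .univ, (G.neighborSet v).ncard + 1 = (G.vertexSet .univ).ncard := by
  classical
  have := Finite.of_surjective c hsurj
  have := Fintype.ofFinite K
  set W := (G.finite_vertexSet .univ).toFinset
  set S : K → Finset V := fun i => (G.finite_vertexSet (c ⁻¹' {i})).toFinset with hS
  have mem_W (v : V) : v ∈ W ↔ v ∈ G.vertexSet .univ := Set.Finite.mem_toFinset _
  have coe_S (i : K) : (S i : Set V) = G.vertexSet (c ⁻¹' {i}) := Set.Finite.coe_toFinset _
  have card_W : W.card = (G.vertexSet .univ).ncard := (Set.ncard_eq_toFinset_card _ _).symm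
  have degree_eq (v : V) :
      (Finset.univ.filter fun i => v ∈ S i).card = (G.neighborSet v).ncard := by
    rw [← ncard_setOf_mem_ends (ends_injective hc hclass),
      ← ncard_setOf_mem_vertexSet_colorClass hc, Set.ncard_eq_toFinset_card']
    simp only [hS, Set.Finite.mem_toFinset, Set.toFinset_ofPred]
  have hcount := card_eq_of_card_symmDiff_le_two (S := S) (W := W)
    (fun i => Set.Finite.toFinset_mono (vertexSet_mono (Set.subset_univ _)))
    (fun i j hij => ?_) (fun i => ?_) (fun v hv => ?_) (fun v hv => ?_) (fun v _ => ?_)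
  · simpa only [degree_eq, mem_W, card_W, Nat.card_eq_fintype_card] using hcount
  · rw [← Set.ncard_coe_finset, Finset.coe_symmDiff, coe_S, coe_S]
    exact ncard_symmDiff_vertexSet_le_two hc hij
  · obtain ⟨e, rfl⟩ := hsurj i
    rw [← Set.ncard_coe_finset, coe_S]
    exact four_le_ncard_vertexSet_colorClass hc hclass e
  · obtain ⟨e, -, hve⟩ := (mem_W v).1 hv
    obtain ⟨f, hvf, hfe⟩ := exists_color_ne_of_mem_ends hc hsurj hfull hve
    refine Finset.one_lt_card.2 ⟨c f, ?_, c e, ?_, hfe⟩ <;>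
      simp only [hS, Finset.mem_filter_univ, Set.Finite.mem_toFinset]
    · exact ⟨f, rfl, hvf⟩
    · exact ⟨e, rfl, hve⟩
  · rw [degree_eq, card_W, ← Set.ncard_sdiff_singleton_add_one ((mem_W v).1 hv)
      (G.finite_vertexSet _), Nat.lt_succ_iff]
    exact Set.ncard_le_ncard (G.neighborSet_subset v) (G.finite_vertexSet _).sdiff
  · obtain ⟨i, hi⟩ := not_forall.1 (hfull v)
    exact ⟨i, fun h => hi ((Set.Finite.mem_toFinset _).1 h)⟩

theorem neighborSet_eq_of_forall_not_isFull [Finite E] [Nonempty K]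
    (hc : IsKempeColoring G.lineGraph c) (hsurj : Function.Surjective c)
    (hclass : ∀ e, ∃ f, c f = c e ∧ f ≠ e) (hfull : ∀ v, ¬ G.IsFull c v) {v : V}
    (hv : v ∈ G.vertexSet .univ) : G.neighborSet v = G.vertexSet .univ \ {v} := by
  have finite := (G.finite_vertexSet .univ).sdiff (t := {v})
  refine Set.eq_of_subset_of_ncard_le (G.neighborSet_subset v) ?_ finite
  have := (ncard_neighborSet_of_forall_not_isFull hc hsurj hclass hfull).2 v hv
  have := Set.ncard_sdiff_singleton_add_one hv (G.finite_vertexSet .univ)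
  lia

end Multigraph

/-! ### Complete graphs -/

section Labelling

open Finset

variable {ι V : Type*} [Fintype ι] [Fintype V]

-- `Z` maximises the difference between the number of sets contained in it and its size.
theorem exists_forall_card_le_card_biUnion [DecidableEq V] [DecidableEq ι] (A : ι → Finset V)
    (hcard : Fintype.card V = Fintype.card ι) : ∃ Z : Finset V, ∀ S : Finset V,
      #S ≤ #(S.biUnion fun v => {i | (v ∈ Z → A i ⊆ Z) ∧ (v ∈ A i ∨ v ∉ Z ∧ A i ⊆ Z)}) := by
  let I (Z : Finset V) : Finset ι := {i | A i ⊆ Z}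
  have mem_I {Y : Finset V} {i : ι} : i ∈ I Y ↔ A i ⊆ Y := mem_filter_univ i
  obtain ⟨Z, -, hmax⟩ := exists_max_image univ (fun Z => (#(I Z) : ℤ) - #Z) univ_nonempty
  have hmax (Y : Finset V) : #(I Y) + #Z ≤ #(I Z) + #Y := by
    have := hmax Y (mem_univ Y)
    lia
  let N (v : V) : Finset ι := {i | (v ∈ Z → A i ⊆ Z) ∧ (v ∈ A i ∨ v ∉ Z ∧ A i ⊆ Z)}
  have mem_N {v : V} {i : ι} :
      i ∈ N v ↔ (v ∈ Z → A i ⊆ Z) ∧ (v ∈ A i ∨ v ∉ Z ∧ A i ⊆ Z) := mem_filter_univ i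
  refine ⟨Z, fun S => ?_⟩
  change #S ≤ #(S.biUnion N)
  by_cases hSZ : S ⊆ Z
  · have hsub : I Z ⊆ S.biUnion N ∪ I (Z \ S) := fun i hi => by
      rw [mem_union, mem_biUnion, mem_I]
      by_contra! hN
      refine hN.2 (subset_sdiff.2 ⟨mem_I.1 hi, disjoint_left.2 fun v hvA hvS => ?_⟩)
      exact hN.1 v hvS (mem_N.2 ⟨fun _ => mem_I.1 hi, .inl hvA⟩)
    have := (card_le_card hsub).trans (card_union_le _ _)
    have := card_sdiff_add_card_eq_card hSZ
    have := hmax (Z \ S)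
    lia
  · obtain ⟨w, hwS, hwZ⟩ := not_subset.1 hSZ
    have hsub : univ ⊆ S.biUnion N ∪ (I (S \ Z)ᶜ \ I Z) := fun i _ => by
      rw [mem_union, mem_biUnion, mem_sdiff, mem_I, mem_I]
      by_contra! hN
      have hiZ : ¬ A i ⊆ Z := fun h => hN.1 w hwS (mem_N.2 ⟨fun _ => h, .inr ⟨hwZ, h⟩⟩)
      refine hiZ (hN.2 fun v hvA => mem_compl.2 fun hv => ?_)
      obtain ⟨hvS, hvZ⟩ := mem_sdiff.1 hv
      exact hN.1 v hvS (mem_N.2 ⟨fun h => (hvZ h).elim, .inl hvA⟩)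
    have hIZ : I Z ⊆ I (S \ Z)ᶜ := fun i hi =>
      mem_I.2 ((mem_I.1 hi).trans (subset_compl_iff_disjoint_right.2 disjoint_sdiff))
    have := (card_le_card hsub).trans (card_union_le _ _)
    have := card_sdiff_add_card_eq_card hIZ
    have := hmax (S \ Z)ᶜ
    have := card_add_card_compl (S \ Z)
    have := card_le_card (subset_union_left : S ⊆ S ∪ Z)
    have := card_sdiff_add_card S Z
    rw [card_univ] at *
    lia

theorem exists_equiv_mem_or_subset (A : ι → Finset V)
    (hcard : Fintype.card V = Fintype.card ι) :
    ∃ (Z : Finset V) (σ : V ≃ ι), ∀ v,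
      (v ∈ Z → A (σ v) ⊆ Z) ∧ (v ∈ A (σ v) ∨ v ∉ Z ∧ A (σ v) ⊆ Z) := by
  classical
  obtain ⟨Z, hZ⟩ := exists_forall_card_le_card_biUnion A hcard
  obtain ⟨σ, hσ, hmem⟩ := (all_card_le_biUnion_card_iff_exists_injective _).1 hZ
  simp only [mem_filter_univ] at hmem
  exact ⟨Z, .ofBijective σ ((Fintype.bijective_iff_injective_and_card σ).2 ⟨hσ, hcard⟩), hmem⟩

end Labelling

namespace Multigraph

variable {V E K : Type*} {G : Multigraph V E} {t : V → E} {o : E → V} {Z : Set V}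

/-- A labelling `t` of some edges by the vertices is adapted to `Z` if `v` is an endpoint of `t v`,
except for some `v ∉ Z` for which `t v` is an edge inside `Z`; the edges labelled by vertices of `Z`
lie inside `Z`, too. -/
structure IsAdapted (G : Multigraph V E) (t : V → E) (Z : Set V) : Prop where
  mem_of_mem : ∀ ⦃v⦄, v ∈ Z → ∀ w ∈ G.ends (t v), w ∈ Z
  mem_or : ∀ v, v ∈ G.ends (t v) ∨ v ∉ Z ∧ ∀ w ∈ G.ends (t v), w ∈ Z

theorem IsAdapted.eq_of_ends_eq (h : G.IsAdapted t Z) {m x y : V} (hx : x ∉ G.ends (t x))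
    (hm : G.ends (t m) = s(x, y)) : m = y ∧ y ∉ Z := by
  have hxZ : x ∉ Z := ((h.mem_or x).resolve_left hx).1
  have hxm : x ∈ G.ends (t m) := hm ▸ Sym2.mem_mk_left x y
  have hmm : m ∈ G.ends (t m) := (h.mem_or m).resolve_right fun h => hxZ (h.2 x hxm)
  rw [hm, Sym2.mem_iff] at hmm
  rcases hmm with rfl | rfl
  · exact (hx hxm).elim
  · exact ⟨rfl, fun hmZ => hxZ (h.mem_of_mem hmZ x hxm)⟩

/-- `o` assigns each edge to an owner, namely the edge `t v` to `v` and any edge not of this form to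
one of its endpoints. The sets of edges with a given owner are the branch sets of the complete minor
to be found. -/
structure IsOwner (G : Multigraph V E) (t : V → E) (o : E → V) : Prop where
  apply_root : ∀ v, o (t v) = v
  mem_ends : ∀ e ∉ Set.range t, o e ∈ G.ends e

theorem exists_isOwner (G : Multigraph V E) (ht : Function.Injective t) {R : V → V → Prop}
    (hR : ∀ p q, R p q → ¬ R q p) :
    ∃ o, G.IsOwner t o ∧ ∀ e ∉ Set.range t, ∀ p q, G.ends e = s(p, q) → R p q → o e = q := by
  have exists_owner (e : E) : ∃ v, (∀ w, t w = e → v = w) ∧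
      (e ∉ Set.range t → v ∈ G.ends e ∧ ∀ p q, G.ends e = s(p, q) → R p q → v = q) := by
    by_cases he : e ∈ Set.range t
    · obtain ⟨v, rfl⟩ := he
      exact ⟨v, fun w hw => ht hw.symm, fun h => (h ⟨v, rfl⟩).elim⟩
    · suffices ∃ v ∈ G.ends e, ∀ p q, G.ends e = s(p, q) → R p q → v = q from
        this.imp fun v hv => ⟨fun w hw => (he ⟨w, hw⟩).elim, fun _ => hv⟩
      by_cases hpq : ∃ p q, G.ends e = s(p, q) ∧ R p q
      · obtain ⟨p, q, hpq, hRpq⟩ := hpq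
        refine ⟨q, hpq ▸ Sym2.mem_mk_right p q, fun p' q' hpq' hRpq' => ?_⟩
        rcases Sym2.eq_iff.1 (hpq.symm.trans hpq') with ⟨-, h⟩ | ⟨rfl, rfl⟩
        · exact h
        · exact (hR _ _ hRpq hRpq').elim
      · obtain ⟨v, hv⟩ := G.exists_mem_ends e
        exact ⟨v, hv, fun p q h hRpq => (hpq ⟨p, q, h, hRpq⟩).elim⟩
  choose o hroot ho using exists_owner
  exact ⟨o, ⟨fun v => hroot _ v rfl, fun e he => (ho e he).1⟩, fun e he => (ho e he).2⟩

theorem IsOwner.connected (ho : G.IsOwner t o) {v w : V} {e : E} (he : o e = v)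
    (hv : v ∈ G.ends e) (hwe : w ∈ G.ends e) (hwt : w ∈ G.ends (t v)) :
    (G.lineGraph.induce (o ⁻¹' {v})).Connected := by
  refine connected_induce_of_forall_adj he fun f hf hfe => ⟨hfe, ?_⟩
  by_cases hft : f ∈ Set.range t
  · obtain ⟨u, rfl⟩ := hft
    obtain rfl : u = v := (ho.apply_root u).symm.trans hf
    exact ⟨w, hwt, hwe⟩
  · exact ⟨v, Eq.subst hf (ho.mem_ends f hft), hv⟩

theorem IsOwner.connected_of_mem (ho : G.IsOwner t o) {v : V} (hv : v ∈ G.ends (t v)) :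
    (G.lineGraph.induce (o ⁻¹' {v})).Connected :=
  ho.connected (ho.apply_root v) hv hv hv

theorem edgesIncident_comm {F F' : Set E} : G.EdgesIncident F F' ↔ G.EdgesIncident F' F :=
  ⟨fun ⟨e, he, f, hf, v, hve, hvf⟩ => ⟨f, hf, e, he, v, hvf, hve⟩,
    fun ⟨e, he, f, hf, v, hve, hvf⟩ => ⟨f, hf, e, he, v, hvf, hve⟩⟩

theorem IsOwner.rootedCompleteMinor (ho : G.IsOwner t o)
    (hconn : ∀ v, (G.lineGraph.induce (o ⁻¹' {v})).Connected)
    (hinc : ∀ u v, u ≠ v → G.EdgesIncident (o ⁻¹' {u}) (o ⁻¹' {v})) :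
    RootedCompleteMinor G.lineGraph t := by
  refine ⟨fun v => o ⁻¹' {v}, ⟨hconn, fun u v huv => ?_, fun u v huv => ?_⟩, ho.apply_root⟩
  · exact Disjoint.preimage o (Set.disjoint_singleton.2 huv)
  · obtain ⟨e, rfl, f, rfl, hef⟩ := hinc u v huv
    exact ⟨e, rfl, f, rfl, fun h => huv (h ▸ rfl), hef⟩

-- An edge `uv` is owned by one of its endpoints unless it is labelled by a third vertex.
theorem IsOwner.edgesIncident (ho : G.IsOwner t o)
    (hcomplete : ∀ u v, u ≠ v → ∃ e, G.ends e = s(u, v)) {u v : V} (huv : u ≠ v)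
    (hu : ∃ e, o e = u ∧ u ∈ G.ends e) (hv : ∃ e, o e = v ∧ v ∈ G.ends e)
    (hexcess : ∀ x, x ∉ G.ends (t x) → G.ends (t x) = s(u, v) →
      G.EdgesIncident (o ⁻¹' {u}) (o ⁻¹' {v})) :
    G.EdgesIncident (o ⁻¹' {u}) (o ⁻¹' {v}) := by
  obtain ⟨e, he⟩ := hcomplete u v huv
  by_cases hoe : o e ∈ G.ends e
  · rw [he, Sym2.mem_iff] at hoe
    rcases hoe with rfl | rfl
    · obtain ⟨f, hf, hvf⟩ := hv
      exact ⟨e, rfl, f, hf, v, he ▸ Sym2.mem_mk_right _ v, hvf⟩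
    · obtain ⟨f, hf, huf⟩ := hu
      exact ⟨f, hf, e, rfl, u, huf, he ▸ Sym2.mem_mk_left u _⟩
  · by_cases het : e ∈ Set.range t
    · obtain ⟨x, rfl⟩ := het
      rw [ho.apply_root] at hoe
      exact hexcess x hoe he
    · exact (hoe (ho.mem_ends e het)).elim

theorem IsOwner.rootedCompleteMinor_of_forall_notMem (ho : G.IsOwner t o)
    (hcomplete : ∀ u v, u ≠ v → ∃ e, G.ends e = s(u, v))
    (htouch : ∀ x, x ∉ G.ends (t x) →
      ∃ e, o e = x ∧ x ∈ G.ends e ∧ ∃ w, w ∈ G.ends e ∧ w ∈ G.ends (t x))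
    (hexcess : ∀ x u v, x ∉ G.ends (t x) → G.ends (t x) = s(u, v) →
      G.EdgesIncident (o ⁻¹' {u}) (o ⁻¹' {v})) :
    RootedCompleteMinor G.lineGraph t := by
  have touch (v : V) : ∃ e, o e = v ∧ v ∈ G.ends e ∧ ∃ w, w ∈ G.ends e ∧ w ∈ G.ends (t v) := by
    by_cases hv : v ∈ G.ends (t v)
    · exact ⟨t v, ho.apply_root v, hv, v, hv, hv⟩
    · exact htouch v hv
  refine ho.rootedCompleteMinor (fun v => ?_) fun u v huv => ?_
  · obtain ⟨e, he, hv, w, hwe, hwt⟩ := touch v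
    exact ho.connected he hv hwe hwt
  · exact ho.edgesIncident hcomplete huv ((touch u).imp fun e h => ⟨h.1, h.2.1⟩)
      ((touch v).imp fun e h => ⟨h.1, h.2.1⟩) fun x => hexcess x u v

end Multigraph

namespace Multigraph

variable {V E K : Type*} {G : Multigraph V E} {t : V → E} {o : E → V} {Z : Set V}

theorem exists_mem_notMem_of_ends_ne {e f : E} (h : G.ends e ≠ G.ends f) :
    ∃ z, z ∈ G.ends e ∧ z ∉ G.ends f := by
  obtain ⟨x, hx⟩ := G.exists_mem_ends e
  obtain ⟨y, hyx, hxy⟩ := exists_ends_eq_of_mem hx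
  by_contra! hmem
  refine h (hxy.trans ((Sym2.mem_and_mem_iff hyx.symm).1 ⟨hmem x hx, hmem y ?_⟩).symm)
  exact hxy ▸ Sym2.mem_mk_right x y

theorem IsAdapted.exists_ends_eq (h : G.IsAdapted t Z)
    (hcomplete : ∀ u v, u ≠ v → ∃ e, G.ends e = s(u, v)) {x z : V} (hx : x ∉ G.ends (t x))
    (hz : z ∈ Z) : ∃ e ∉ Set.range t, G.ends e = s(x, z) := by
  have hxZ : x ∉ Z := ((h.mem_or x).resolve_left hx).1
  obtain ⟨e, he⟩ := hcomplete x z fun hxz => hxZ (hxz ▸ hz)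
  refine ⟨e, ?_, he⟩
  rintro ⟨m, rfl⟩
  exact (h.eq_of_ends_eq hx he).2 hz

theorem IsAdapted.rootedCompleteMinor_of_forall_exists_mem (h : G.IsAdapted t Z)
    (hcomplete : ∀ u v, u ≠ v → ∃ e, G.ends e = s(u, v)) (ht : Function.Injective t)
    (hmeet : ∀ x u v, x ∉ G.ends (t x) → G.ends (t x) = s(u, v) →
      ∃ y, y ∈ G.ends (t u) ∧ y ∈ G.ends (t v)) : RootedCompleteMinor G.lineGraph t := by
  obtain ⟨o, ho, hoR⟩ := exists_isOwner G ht
    (R := fun p q => q ∉ G.ends (t q) ∧ p ∈ G.ends (t p)) fun p q hpq hqp => hpq.1 hqp.2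
  refine ho.rootedCompleteMinor_of_forall_notMem hcomplete (fun x hx => ?_)
    fun x u v hx huv => ?_
  · obtain ⟨a, ha⟩ := G.exists_mem_ends (t x)
    have haZ : a ∈ Z := ((h.mem_or x).resolve_left hx).2 a ha
    have haa : a ∈ G.ends (t a) := (h.mem_or a).resolve_right fun h => h.1 haZ
    obtain ⟨e, het, he⟩ := h.exists_ends_eq hcomplete hx haZ
    exact ⟨e, hoR e het a x (he.trans Sym2.eq_swap) ⟨hx, haa⟩, he ▸ Sym2.mem_mk_left x a, a,
      he ▸ Sym2.mem_mk_right x a, ha⟩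
  · exact ⟨t u, ho.apply_root u, t v, ho.apply_root v, hmeet x u v hx huv⟩

-- The vertices `x` that are not endpoints of `t x` are permuted cyclically by `σ`. For such `x`,
-- the edge `xz` is owned by `z` if `z` is an endpoint of `t (σ x)`, and by `x` if `z` is any
-- other vertex of `Z`.
theorem IsAdapted.rootedCompleteMinor_of_nontrivial [Countable V] (h : G.IsAdapted t Z)
    (hcomplete : ∀ u v, u ≠ v → ∃ e, G.ends e = s(u, v)) (hends : Function.Injective G.ends)
    (ht : Function.Injective t) (hX : {x | x ∉ G.ends (t x)}.Nontrivial) :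
    RootedCompleteMinor G.lineGraph t := by
  classical
  set X := {x | x ∉ G.ends (t x)}
  have mem_Z {x : V} (hx : x ∈ X) {z : V} (hz : z ∈ G.ends (t x)) : z ∈ Z :=
    ((h.mem_or x).resolve_left hx).2 z hz
  have notMem_Z {x : V} (hx : x ∈ X) : x ∉ Z := ((h.mem_or x).resolve_left hx).1
  obtain ⟨σ, hσ, -⟩ := X.to_countable.exists_cycleOn
  obtain ⟨o, ho, hoR⟩ := exists_isOwner G ht
    (R := fun p q => (p ∈ X ∧ q ∈ Z ∧ q ∈ G.ends (t (σ p))) ∨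
      (q ∈ X ∧ p ∈ Z ∧ p ∉ G.ends (t (σ q)))) (by grind)
  refine ho.rootedCompleteMinor_of_forall_notMem hcomplete (fun x hx => ?_)
    fun x u v hx huv => ?_
  · obtain ⟨z, hzx, hzσ⟩ := exists_mem_notMem_of_ends_ne
      (hends.ne (ht.ne (hσ.apply_ne hX hx).symm))
    obtain ⟨e, het, he⟩ := h.exists_ends_eq hcomplete hx (mem_Z hx hzx)
    exact ⟨e, hoR e het z x (he.trans Sym2.eq_swap) (.inr ⟨hx, mem_Z hx hzx, hzσ⟩),
      he ▸ Sym2.mem_mk_left x z, z, he ▸ Sym2.mem_mk_right x z, hzx⟩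
  · obtain ⟨w, rfl⟩ := σ.surjective x
    have hw : w ∈ X := hσ.apply_mem_iff.1 hx
    have exists_owned {z : V} (hz : z ∈ G.ends (t (σ w))) : ∃ e, o e = z ∧ w ∈ G.ends e := by
      obtain ⟨e, het, he⟩ := h.exists_ends_eq hcomplete hw (mem_Z hx hz)
      exact ⟨e, hoR e het w z he (.inl ⟨hw, mem_Z hx hz, hz⟩), he ▸ Sym2.mem_mk_left w z⟩
    obtain ⟨e, heu, hwe⟩ := exists_owned (huv ▸ Sym2.mem_mk_left u v)
    obtain ⟨f, hfv, hwf⟩ := exists_owned (huv ▸ Sym2.mem_mk_right u v)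
    exact ⟨e, heu, f, hfv, w, hwe, hwf⟩

theorem IsOwner.edgesIncident_of_disjoint (ho : G.IsOwner t o)
    (hcomplete : ∀ u v, u ≠ v → ∃ e, G.ends e = s(u, v)) {x a b y : V}
    (hX : ∀ y, y ≠ x → y ∈ G.ends (t y)) (hab : G.ends (t x) = s(a, b))
    (hdisj : ∀ y, y ∈ G.ends (t a) → y ∉ G.ends (t b)) (hyx : y ≠ x)
    (hexit : ∀ e ∉ Set.range t, ∀ z ∈ G.ends (t x), G.ends e = s(z, y) → y ∉ G.ends (t x) →
      o e = y) : G.EdgesIncident (o ⁻¹' {x}) (o ⁻¹' {y}) := by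
  by_cases hyt : y ∈ G.ends (t x)
  · exact ⟨t x, ho.apply_root x, t y, ho.apply_root y, y, hyt, hX y hyx⟩
  have owned_or {z : V} (hz : z ∈ G.ends (t x)) :
      ∃ e, (o e = y ∨ e = t z) ∧ z ∈ G.ends e ∧ y ∈ G.ends e := by
    obtain ⟨e, he⟩ := hcomplete z y fun hzy => hyt (hzy ▸ hz)
    refine ⟨e, ?_, he ▸ Sym2.mem_mk_left z y, he ▸ Sym2.mem_mk_right z y⟩
    by_cases het : e ∈ Set.range t
    · obtain ⟨m, rfl⟩ := het
      have hmm : m ∈ G.ends (t m) := hX m fun hmx => hyt (hmx ▸ he ▸ Sym2.mem_mk_right z y)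
      rw [he, Sym2.mem_iff] at hmm
      exact hmm.symm.imp (fun h => (ho.apply_root m).trans h) fun h => congrArg t h
    · exact .inl (hexit e het z hz he hyt)
  have ha : a ∈ G.ends (t x) := hab ▸ Sym2.mem_mk_left a b
  have hb : b ∈ G.ends (t x) := hab ▸ Sym2.mem_mk_right a b
  obtain ⟨e, hoe | rfl, hae, hye⟩ := owned_or ha
  · exact ⟨t x, ho.apply_root x, e, hoe, a, ha, hae⟩
  obtain ⟨f, hof | rfl, hbf, hyf⟩ := owned_or hb
  · exact ⟨t x, ho.apply_root x, f, hof, b, hb, hbf⟩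
  exact (hdisj y hye hyf).elim

theorem IsAdapted.rootedCompleteMinor_of_forall_ne (h : G.IsAdapted t Z)
    (hcomplete : ∀ u v, u ≠ v → ∃ e, G.ends e = s(u, v)) (ht : Function.Injective t)
    {x a b : V} (hx : x ∉ G.ends (t x)) (hX : ∀ y, y ≠ x → y ∈ G.ends (t y))
    (hab : G.ends (t x) = s(a, b)) (hdisj : ∀ y, y ∈ G.ends (t a) → y ∉ G.ends (t b)) :
    RootedCompleteMinor G.lineGraph t := by
  obtain ⟨o, ho, hoR⟩ := exists_isOwner G ht
    (R := fun p q => q ≠ x ∧ (p = x ∨ p ∈ G.ends (t x) ∧ q ∉ G.ends (t x))) (by grind)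
  have eq_root {e : E} (he : o e = x) : e = t x := by
    by_cases het : e ∈ Set.range t
    · obtain ⟨m, rfl⟩ := het
      rw [← ho.apply_root m, he]
    · obtain ⟨y, hyx, hy⟩ := exists_ends_eq_of_mem (Eq.subst he (ho.mem_ends e het))
      exact (hyx (((hoR e het x y hy) ⟨hyx, .inl rfl⟩).symm.trans he)).elim
  refine ho.rootedCompleteMinor (fun v => ?_) fun u v huv => ?_
  · by_cases hv : v = x
    · have hpre : o ⁻¹' {v} = {t x} := by
        ext e
        exact ⟨fun he => eq_root (Eq.trans he hv), fun he => he ▸ (ho.apply_root x).trans hv.symm⟩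
      exact hpre ▸ connected_induce_singleton _ _
    · exact ho.connected_of_mem (hX v hv)
  · have incident_root {y : V} (hyx : y ≠ x) : G.EdgesIncident (o ⁻¹' {x}) (o ⁻¹' {y}) :=
      ho.edgesIncident_of_disjoint hcomplete hX hab hdisj hyx
        fun e het z hz he hyt => hoR e het z y he ⟨hyx, .inr ⟨hz, hyt⟩⟩
    rcases eq_or_ne u x with rfl | hux
    · exact incident_root huv.symm
    rcases eq_or_ne v x with rfl | hvx
    · exact edgesIncident_comm.1 (incident_root hux)
    refine ho.edgesIncident hcomplete huv ⟨t u, ho.apply_root u, hX u hux⟩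
      ⟨t v, ho.apply_root v, hX v hvx⟩ fun x' hx' huv' => ?_
    obtain rfl : x' = x := not_imp_comm.1 (hX x') hx'
    have exists_owned_at {z : V} (hz : z ∈ G.ends (t x')) (hzx : z ≠ x') :
        ∃ e, o e = z ∧ x' ∈ G.ends e := by
      obtain ⟨e, het, he⟩ := h.exists_ends_eq hcomplete hx (((h.mem_or x').resolve_left hx).2 z hz)
      exact ⟨e, hoR e het x' z he ⟨hzx, .inl rfl⟩, he ▸ Sym2.mem_mk_left x' z⟩
    obtain ⟨e, hoe, hxe⟩ := exists_owned_at (huv' ▸ Sym2.mem_mk_left u v) hux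
    obtain ⟨f, hof, hxf⟩ := exists_owned_at (huv' ▸ Sym2.mem_mk_right u v) hvx
    exact ⟨e, hoe, f, hof, x', hxe, hxf⟩

theorem IsAdapted.rootedCompleteMinor [Countable V] (h : G.IsAdapted t Z)
    (hcomplete : ∀ u v, u ≠ v → ∃ e, G.ends e = s(u, v)) (hends : Function.Injective G.ends)
    (ht : Function.Injective t) : RootedCompleteMinor G.lineGraph t := by
  by_cases hmeet : ∀ x u v, x ∉ G.ends (t x) → G.ends (t x) = s(u, v) →
      ∃ y, y ∈ G.ends (t u) ∧ y ∈ G.ends (t v)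
  · exact h.rootedCompleteMinor_of_forall_exists_mem hcomplete ht hmeet
  push Not at hmeet
  obtain ⟨x, a, b, hx, hab, hdisj⟩ := hmeet
  by_cases hX : ∀ y, y ≠ x → y ∈ G.ends (t y)
  · exact h.rootedCompleteMinor_of_forall_ne hcomplete ht hx hX hab hdisj
  · push Not at hX
    obtain ⟨y, hyx, hy⟩ := hX
    exact h.rootedCompleteMinor_of_nontrivial hcomplete hends ht ⟨y, hy, x, hx, hyx⟩

theorem rootedCompleteMinor_of_complete [Finite V] [Finite K] (hcard : Nat.card V = Nat.card K)
    (hcomplete : ∀ u v, u ≠ v → ∃ e, G.ends e = s(u, v)) (hends : Function.Injective G.ends)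
    {t : K → E} (ht : Function.Injective t) : RootedCompleteMinor G.lineGraph t := by
  classical
  have := Fintype.ofFinite V
  have := Fintype.ofFinite K
  obtain ⟨Z, σ, hZ⟩ := exists_equiv_mem_or_subset (fun i => (G.ends (t i)).toFinset)
    (by simpa only [Nat.card_eq_fintype_card] using hcard)
  have hadapted : G.IsAdapted (t ∘ σ) Z := by
    constructor <;> intro v <;> have := hZ v <;> simp_all [Finset.subset_iff]
  simpa [Function.comp_def] using
    (hadapted.rootedCompleteMinor hcomplete hends (ht.comp σ.injective)).comp σ.symm.injective

end Multigraph

/-! ### The theorem for Kempe colourings and for partitions into matchings -/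

namespace Multigraph

variable {V E K : Type*} {G : Multigraph V E} {c : E → K} {t : K → E}

/-- The multigraph obtained from `G` by deleting all isolated vertices. -/
def deleteIsolated (G : Multigraph V E) : Multigraph (G.vertexSet .univ) E where
  ends e := (G.ends e).attachWith fun _ hv => ⟨e, trivial, hv⟩
  not_isDiag e h := G.not_isDiag e (by
    rw [← Sym2.attachWith_map_subtypeVal (fun _ hv => ⟨e, trivial, hv⟩ :
      ∀ v ∈ G.ends e, v ∈ G.vertexSet .univ)]
    exact h.map)

theorem map_ends_deleteIsolated (G : Multigraph V E) (e : E) :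
    (G.deleteIsolated.ends e).map Subtype.val = G.ends e :=
  Sym2.attachWith_map_subtypeVal _

theorem mem_ends_deleteIsolated {e : E} {v : G.vertexSet .univ} :
    v ∈ G.deleteIsolated.ends e ↔ v.1 ∈ G.ends e := by
  rw [← G.map_ends_deleteIsolated, Sym2.mem_map]
  exact ⟨fun h => ⟨v, h, rfl⟩, fun ⟨w, hw, hwv⟩ => Subtype.ext hwv ▸ hw⟩

theorem lineGraph_deleteIsolated (G : Multigraph V E) :
    G.deleteIsolated.lineGraph = G.lineGraph := by
  ext e f
  refine and_congr_right fun _ => ⟨fun ⟨v, he, hf⟩ => ⟨v, mem_ends_deleteIsolated.1 he,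
    mem_ends_deleteIsolated.1 hf⟩, fun ⟨v, he, hf⟩ => ?_⟩
  exact ⟨⟨v, e, trivial, he⟩, mem_ends_deleteIsolated.2 he, mem_ends_deleteIsolated.2 hf⟩

theorem rootedCompleteMinor_of_forall_not_isFull [Finite E] [Nonempty K]
    (hc : IsKempeColoring G.lineGraph c) (ht : Function.LeftInverse c t)
    (hclass : ∀ e, ∃ f, c f = c e ∧ f ≠ e) (hfull : ∀ v, ¬ G.IsFull c v) :
    RootedCompleteMinor G.lineGraph t := by
  have := (G.finite_vertexSet .univ).to_subtype
  have := Finite.of_injective t ht.injective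
  rw [← lineGraph_deleteIsolated]
  refine rootedCompleteMinor_of_complete ?_ (fun u v huv => ?_) (fun e f hef => ?_) ht.injective
  · exact (ncard_neighborSet_of_forall_not_isFull hc ht.surjective hclass hfull).1
  · have hv : v.1 ∈ G.neighborSet u :=
      neighborSet_eq_of_forall_not_isFull hc ht.surjective hclass hfull u.2 ▸
        ⟨v.2, fun h => huv (Subtype.ext h.symm)⟩
    obtain ⟨e, he⟩ := hv
    refine ⟨e, Sym2.map.injective Subtype.val_injective ?_⟩
    rw [map_ends_deleteIsolated, he, Sym2.map_mk]
  · refine ends_injective hc hclass ?_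
    rw [← map_ends_deleteIsolated, hef, map_ends_deleteIsolated]

theorem rootedCompleteMinor_lineGraph [Finite E] (hc : IsKempeColoring G.lineGraph c)
    (ht : Function.LeftInverse c t) : RootedCompleteMinor G.lineGraph t := by
  have := Finite.of_injective t ht.injective
  induction hn : Nat.card E using Nat.strong_induction_on generalizing V E with
  | _ n ih =>
    rcases isEmpty_or_nonempty K with hK | hK
    · exact rootedCompleteMinor_of_forall_adj isEmptyElim
    by_cases hfull : ∃ v, G.IsFull c v
    · obtain ⟨v, hv⟩ := hfull
      obtain h | ⟨P, G', D, hP, htP, hc', hD, hmem⟩ :=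
        hv.rootedCompleteMinor_or_exists_contract hc ht
      · exact h
      have hcard : Nat.card P < n := hn ▸ Set.ncard_lt_card hP
      let t' (i : K) : P := ⟨t i, htP ⟨i, rfl⟩⟩
      have ht' : Function.LeftInverse (fun e : P => c e) t' := ht
      exact (ih _ hcard hc' ht' rfl).of_minorModel hD fun i => hmem (t' i)
    push Not at hfull
    by_cases hclass : ∀ e, ∃ f, c f = c e ∧ f ≠ e
    · exact rootedCompleteMinor_of_forall_not_isFull hc ht hclass hfull
    · push Not at hclass
      obtain ⟨e, he⟩ := hclass
      rw [lineGraph_eq_top_of_singleton_class hc ht hfull he]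
      exact rootedCompleteMinor_of_forall_adj fun i j hij => ht.injective.ne hij

theorem edgesConnected_iff {F : Set E} :
    G.EdgesConnected F ↔ (G.lineGraph.induce F).Connected := by
  constructor
  · rintro ⟨⟨e, he⟩, hF⟩
    refine connected_induce_of_forall_subset ⟨e, he⟩ fun U ⟨f, hf, hfU⟩ hU g hg => ?_
    induction hF f hf g hg with
    | refl => exact hfU
    | @tail a b _ hab ih =>
      by_cases hne : a = b
      · exact hne ▸ ih hab.1
      · exact hU a ⟨hab.1, ih hab.1⟩ b hab.2.1 ⟨hne, hab.2.2⟩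
  · intro hF
    obtain ⟨⟨e, he⟩⟩ := hF.nonempty
    refine ⟨⟨e, he⟩, fun a ha b hb => ?_⟩
    exact subset_of_connected_induce (U := {f | Relation.ReflTransGen _ a f}) hF ⟨a, ha, .refl⟩
      (fun f hf g hg hfg => hf.2.tail ⟨hf.1, hg, hfg.2⟩) hb

end Multigraph

theorem IsEdgePartition.exists_color {E : Type*} {𝔠 : Set (Set E)} (h : IsEdgePartition 𝔠) :
    ∃ c : E → 𝔠, ∀ M, c ⁻¹' {M} = M := by
  obtain ⟨-, hcover, hdisj⟩ := h
  have exists_class (e : E) : ∃ M : 𝔠, e ∈ M.1 := by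
    obtain ⟨M, hM, he⟩ := hcover.ge (Set.mem_univ e)
    exact ⟨⟨M, hM⟩, he⟩
  choose c hc using exists_class
  refine ⟨c, fun M => Set.ext fun e => ⟨fun he => he ▸ hc e, fun he => ?_⟩⟩
  by_contra hne
  exact Set.disjoint_left.1 (hdisj _ (c e).2 _ M.2 (Subtype.coe_ne_coe.2 hne)) (hc e) he

namespace Multigraph

variable {V E : Type*} {G : Multigraph V E} {𝔠 : Set (Set E)} {c : E → 𝔠}

theorem isKempeColoring_lineGraph (hc : ∀ M, c ⁻¹' {M} = M) (hmatch : ∀ M ∈ 𝔠, G.Matching M)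
    (hconn : ∀ M ∈ 𝔠, ∀ N ∈ 𝔠, M ≠ N → G.EdgesConnected (M ∪ N)) :
    IsKempeColoring G.lineGraph c where
  ne_of_adj e f hef hcef := by
    have mem_class {e : E} {M : 𝔠} (h : c e = M) : e ∈ M.1 := (hc M).le h
    exact hmatch _ (c f).2 e (mem_class hcef) f (mem_class rfl) hef.1 hef.2
  connected M N hMN := by
    have hunion : {e | c e = M ∨ c e = N} = M.1 ∪ N.1 := congrArg₂ (· ∪ ·) (hc M) (hc N)
    rw [hunion]
    exact edgesConnected_iff.1 (hconn M M.2 N N.2 (Subtype.coe_ne_coe.2 hMN))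

end Multigraph

theorem traversedBy_range {α ι : Type*} {F : ι → Set α} {t : ι → α}
    (hF : Pairwise fun i j => Disjoint (F i) (F j)) (ht : ∀ i, t i ∈ F i) :
    TraversedBy (Set.range F) (Set.range t) := by
  constructor
  · rintro _ ⟨i, rfl⟩
    refine ⟨t i, ⟨⟨i, rfl⟩, ht i⟩, ?_⟩
    rintro _ ⟨⟨j, rfl⟩, hji⟩
    by_contra hne
    exact Set.disjoint_left.1 (hF (ne_of_apply_ne t hne)) (ht j) hji
  · rintro _ ⟨i, rfl⟩
    exact ⟨F i, ⟨i, rfl⟩, ht i⟩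

theorem main_theorem_line_graph_version_general {V E : Type*} [Finite E]
    (G : Multigraph V E) (𝔠 : Set (Set E)) (hpart : IsEdgePartition 𝔠)
    (hmatch : ∀ M ∈ 𝔠, G.Matching M)
    (hconn : ∀ M ∈ 𝔠, ∀ N ∈ 𝔠, M ≠ N → G.EdgesConnected (M ∪ N))
    (T : Set E) (hT1 : ∀ M ∈ 𝔠, ∃! e, e ∈ T ∧ e ∈ M) :
    ∃ 𝔎 : Set (Set E),
      (∀ A ∈ 𝔎, G.EdgesConnected A) ∧
      (∀ A ∈ 𝔎, ∀ B ∈ 𝔎, A ≠ B → Disjoint A B) ∧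
      (∀ A ∈ 𝔎, ∀ B ∈ 𝔎, A ≠ B → G.EdgesIncident A B) ∧
      TraversedBy 𝔎 T := by
  obtain ⟨c, hc⟩ := hpart.exists_color
  choose t htT htM using fun M : 𝔠 => (hT1 M M.2).exists
  have ht : Function.LeftInverse c t := fun M => (hc M).ge (htM M)
  have hrange : Set.range t = T := (Set.range_subset_iff.2 htT).antisymm fun e he =>
    ⟨c e, (hT1 _ (c e).2).unique ⟨htT _, htM _⟩ ⟨he, (hc (c e)).le rfl⟩⟩
  obtain ⟨F, hF, htF⟩ := Multigraph.rootedCompleteMinor_lineGraph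
    (Multigraph.isKempeColoring_lineGraph hc hmatch hconn) ht
  refine ⟨Set.range F, ?_, ?_, ?_, hrange ▸ traversedBy_range hF.disjoint htF⟩
  · rintro _ ⟨M, rfl⟩
    exact Multigraph.edgesConnected_iff.2 (hF.connected M)
  · rintro _ ⟨M, rfl⟩ _ ⟨N, rfl⟩ hMN
    exact hF.disjoint (ne_of_apply_ne F hMN)
  · rintro _ ⟨M, rfl⟩ _ ⟨N, rfl⟩ hMN
    obtain ⟨e, he, f, hf, -, hef⟩ := hF.exists_adj (ne_of_apply_ne F hMN)
    exact ⟨e, he, f, hf, hef⟩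

/-- Main theorem (Theorem 2): if the edge set of a graph `H` is partitioned into
matchings any two of which have connected union, then for every transversal `T`
of the partition there is a family of connected, pairwise disjoint, pairwise
incident edge sets traversed by `T`. -/
theorem main_theorem_line_graph_version {V E : Type*} [Fintype V] [Fintype E]
    (G : Multigraph V E) (𝔠 : Set (Set E)) (hpart : IsEdgePartition 𝔠)
    (hmatch : ∀ M ∈ 𝔠, G.Matching M)
    (hconn : ∀ M ∈ 𝔠, ∀ N ∈ 𝔠, M ≠ N → G.EdgesConnected (M ∪ N))
    (T : Set E) (hT : T ⊆ ⋃₀ 𝔠) (hT1 : ∀ M ∈ 𝔠, ∃! e, e ∈ T ∧ e ∈ M) :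
    ∃ 𝔎 : Set (Set E),
      (∀ A ∈ 𝔎, G.EdgesConnected A) ∧
      (∀ A ∈ 𝔎, ∀ B ∈ 𝔎, A ≠ B → Disjoint A B) ∧
      (∀ A ∈ 𝔎, ∀ B ∈ 𝔎, A ≠ B → G.EdgesIncident A B) ∧
      TraversedBy 𝔎 T := by
  exact main_theorem_line_graph_version_general G 𝔠 hpart hmatch hconn T hT1
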